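/- arXiv:1301.0838 — 6 statements merged into one kernel-verified Lean document; each statement's English description precedes it below -/
import Mathlib

section
/- Let A be a connected superbialgebra over K (i.e., the even part A₀ equals K·1, where 1 is the unit of A). Then the product of any two odd elements vanishes: for all x, y ∈ A₁ one has x·y = 0 and y·x = 0. -/
open TensorProduct

section SuperDefs

variable (K A : Type*) [Field K] [Ring A] [Algebra K A]

/-- A superalgebra structure on the unital associative `K`-algebra `A`: a `ℤ/2ℤ`-grading
`A = A₀ ⊕ A₁` of `K`-vector spaces with `1 ∈ A₀` and `Aᵢ · Aⱼ ⊆ A_{i+j mod 2}`. -/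
structure SuperAlgebra where
  A₀ : Submodule K A
  A₁ : Submodule K A
  compl : IsCompl A₀ A₁
  one_mem : (1 : A) ∈ A₀
  mul_mem₀₀ : ∀ a ∈ A₀, ∀ b ∈ A₀, a * b ∈ A₀
  mul_mem₀₁ : ∀ a ∈ A₀, ∀ b ∈ A₁, a * b ∈ A₁
  mul_mem₁₀ : ∀ a ∈ A₁, ∀ b ∈ A₀, a * b ∈ A₁
  mul_mem₁₁ : ∀ a ∈ A₁, ∀ b ∈ A₁, a * b ∈ A₀

namespace SuperAlgebra

variable {K A}

/-- The projection onto the even part along the odd part. -/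
noncomputable def p₀ (S : SuperAlgebra K A) : A →ₗ[K] A :=
  S.A₀.subtype ∘ₗ Submodule.linearProjOfIsCompl S.A₀ S.A₁ S.compl

/-- The projection onto the odd part along the even part. -/
noncomputable def p₁ (S : SuperAlgebra K A) : A →ₗ[K] A :=
  S.A₁.subtype ∘ₗ Submodule.linearProjOfIsCompl S.A₁ S.A₀ S.compl.symm

/-- The superflip `τ : A ⊗ A → A ⊗ A`, `a ⊗ b ↦ (-1)^{|a||b|} b ⊗ a` on homogeneous
elements. -/
noncomputable def τ (S : SuperAlgebra K A) : A ⊗[K] A →ₗ[K] A ⊗[K] A :=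
  (TensorProduct.comm K A A).toLinearMap ∘ₗ
    (TensorProduct.map S.p₀ S.p₀ + TensorProduct.map S.p₀ S.p₁ +
      TensorProduct.map S.p₁ S.p₀ - TensorProduct.map S.p₁ S.p₁)

variable (K A) in
/-- Regrouping `(A ⊗ A) ⊗ (A ⊗ A) ≃ A ⊗ ((A ⊗ A) ⊗ A)`. -/
noncomputable def rearr : ((A ⊗[K] A) ⊗[K] (A ⊗[K] A)) ≃ₗ[K] (A ⊗[K] ((A ⊗[K] A) ⊗[K] A)) :=
  (TensorProduct.assoc K A A (A ⊗[K] A)) ≪≫ₗ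
    TensorProduct.congr (LinearEquiv.refl K A) (TensorProduct.assoc K A A A).symm

/-- The map `(μ ⊗ μ) ∘ (id ⊗ τ ⊗ id) : (A ⊗ A) ⊗ (A ⊗ A) → A ⊗ A`, i.e. the super
multiplication of `A ⊗ A`. -/
noncomputable def superBimul (S : SuperAlgebra K A) :
    ((A ⊗[K] A) ⊗[K] (A ⊗[K] A)) →ₗ[K] A ⊗[K] A :=
  TensorProduct.map (LinearMap.mul' K A) (LinearMap.mul' K A) ∘ₗ
    (rearr K A).symm.toLinearMap ∘ₗ
    TensorProduct.map (LinearMap.id : A →ₗ[K] A)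
      (TensorProduct.map S.τ (LinearMap.id : A →ₗ[K] A)) ∘ₗ
    (rearr K A).toLinearMap

/-- The even part of `A ⊗ A` for the total grading. -/
def evenTensor (S : SuperAlgebra K A) : Submodule K (A ⊗[K] A) :=
  LinearMap.range (TensorProduct.map S.A₀.subtype S.A₀.subtype) ⊔
    LinearMap.range (TensorProduct.map S.A₁.subtype S.A₁.subtype)

/-- The odd part of `A ⊗ A` for the total grading. -/
def oddTensor (S : SuperAlgebra K A) : Submodule K (A ⊗[K] A) :=
  LinearMap.range (TensorProduct.map S.A₀.subtype S.A₁.subtype) ⊔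
    LinearMap.range (TensorProduct.map S.A₁.subtype S.A₀.subtype)

end SuperAlgebra

/-- A superbialgebra over `K`: a superalgebra together with grading-preserving linear maps
`Δ : A → A ⊗ A` and `ε : A → K` satisfying coassociativity, counity, and compatibility
with the (super)algebra structure. -/
structure SuperBialgebra extends SuperAlgebra K A where
  Δ : A →ₗ[K] A ⊗[K] A
  ε : A →ₗ[K] K
  Δ_even : ∀ a ∈ A₀, Δ a ∈ toSuperAlgebra.evenTensor
  Δ_odd : ∀ a ∈ A₁, Δ a ∈ toSuperAlgebra.oddTensor
  ε_odd : ∀ a ∈ A₁, ε a = 0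
  coassoc : ∀ a : A,
    TensorProduct.assoc K A A A (TensorProduct.map Δ (LinearMap.id : A →ₗ[K] A) (Δ a)) =
      TensorProduct.map (LinearMap.id : A →ₗ[K] A) Δ (Δ a)
  counit_left : ∀ a : A,
    TensorProduct.lid K A (TensorProduct.map ε (LinearMap.id : A →ₗ[K] A) (Δ a)) = a
  counit_right : ∀ a : A,
    TensorProduct.rid K A (TensorProduct.map (LinearMap.id : A →ₗ[K] A) ε (Δ a)) = a
  Δ_one : Δ 1 = 1 ⊗ₜ[K] 1
  ε_one : ε 1 = 1
  ε_mul : ∀ a b : A, ε (a * b) = ε a * ε b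
  Δ_mul : ∀ a b : A, Δ (a * b) = toSuperAlgebra.superBimul (Δ a ⊗ₜ[K] Δ b)

/-- A Hopf superalgebra: a superbialgebra with a grading-preserving antipode `S`
satisfying `μ ∘ (S ⊗ id) ∘ Δ = μ ∘ (id ⊗ S) ∘ Δ = η ∘ ε`. -/
structure HopfSuperalgebra extends SuperBialgebra K A where
  antipode : A →ₗ[K] A
  antipode_even : ∀ a ∈ A₀, antipode a ∈ A₀
  antipode_odd : ∀ a ∈ A₁, antipode a ∈ A₁
  antipode_left : ∀ a : A,
    LinearMap.mul' K A (TensorProduct.map antipode (LinearMap.id : A →ₗ[K] A) (Δ a)) =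
      algebraMap K A (ε a)
  antipode_right : ∀ a : A,
    LinearMap.mul' K A (TensorProduct.map (LinearMap.id : A →ₗ[K] A) antipode (Δ a)) =
      algebraMap K A (ε a)

end SuperDefs


/-- in a connected superbialgebra the product of any two odd elements
vanishes. -/
theorem connected_superbialgebra_odd_mul_eq_zero
    {K A : Type*} [Field K] [IsAlgClosed K] [CharZero K] [Ring A] [Algebra K A]
    (B : SuperBialgebra K A)
    (hconn : B.A₀ = Submodule.span K {(1 : A)}) :
    ∀ x ∈ B.A₁, ∀ y ∈ B.A₁, x * y = 0 ∧ y * x = 0 := by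
  have key : ∀ x ∈ B.A₁, ∀ y ∈ B.A₁, x * y = 0 := by
    intro x hx y hy
    have h := B.mul_mem₁₁ x hx y hy
    rw [hconn, Submodule.mem_span_singleton] at h
    obtain ⟨c, hc⟩ := h
    have h2 := B.ε_mul x y
    rw [B.ε_odd x hx, zero_mul, ← hc, map_smul, B.ε_one, smul_eq_mul, mul_one] at h2
    rw [← hc, h2, zero_smul]
  exact fun x hx y hy => ⟨key x hx y hy, key y hy x hx⟩
end

section
/- Let A be a finite-dimensional connected superbialgebra over K (i.e., the even part A₀ equals K·1). Then dim_K A ≤ 2; equivalently, an n-dimensional connected superbialgebra exists only when n < 3. -/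
open TensorProduct

namespace SuperAlgebra

variable {K A : Type*} [Field K] [Ring A] [Algebra K A]

theorem p₀_of_even (S : SuperAlgebra K A) {a : A} (h : a ∈ S.A₀) : S.p₀ a = a := by
  have := Submodule.projectionOnto_apply_left S.compl ⟨a, h⟩
  simp only at this
  simp [p₀, Submodule.linearProjOfIsCompl, this]

theorem p₀_of_odd (S : SuperAlgebra K A) {a : A} (h : a ∈ S.A₁) : S.p₀ a = 0 := by
  have := Submodule.projectionOnto_apply_right S.compl ⟨a, h⟩
  simp only at this
  simp [p₀, Submodule.linearProjOfIsCompl, this]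

theorem p₁_of_odd (S : SuperAlgebra K A) {a : A} (h : a ∈ S.A₁) : S.p₁ a = a := by
  have := Submodule.projectionOnto_apply_left S.compl.symm ⟨a, h⟩
  simp only at this
  simp [p₁, Submodule.linearProjOfIsCompl, this]

theorem p₁_of_even (S : SuperAlgebra K A) {a : A} (h : a ∈ S.A₀) : S.p₁ a = 0 := by
  have := Submodule.projectionOnto_apply_right S.compl.symm ⟨a, h⟩
  simp only at this
  simp [p₁, Submodule.linearProjOfIsCompl, this]

theorem superBimul_prim (S : SuperAlgebra K A) {a b : A} (ha : a ∈ S.A₁) (hb : b ∈ S.A₁) :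
    S.superBimul ((1 ⊗ₜ[K] a + a ⊗ₜ[K] 1) ⊗ₜ[K] (1 ⊗ₜ[K] b + b ⊗ₜ[K] 1)) =
      1 ⊗ₜ[K] (a * b) - b ⊗ₜ[K] a + a ⊗ₜ[K] b + (a * b) ⊗ₜ[K] 1 := by
  simp [superBimul, rearr, τ, TensorProduct.add_tmul, TensorProduct.tmul_add,
    S.p₀_of_even S.one_mem, S.p₁_of_even S.one_mem, S.p₀_of_odd ha, S.p₁_of_odd ha,
    S.p₀_of_odd hb, S.p₁_of_odd hb, TensorProduct.neg_tmul, TensorProduct.tmul_neg]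
  abel

theorem range_left (S : SuperAlgebra K A) (h : S.A₀ = Submodule.span K {(1 : A)})
    {t : A ⊗[K] A} (ht : t ∈ LinearMap.range (TensorProduct.map S.A₀.subtype S.A₁.subtype)) :
    ∃ x ∈ S.A₁, t = 1 ⊗ₜ[K] x := by
  obtain ⟨s, rfl⟩ := ht
  induction s using TensorProduct.induction_on with
  | zero => exact ⟨0, zero_mem _, by simp⟩
  | tmul u v =>
    have hu : (u : A) ∈ Submodule.span K {(1 : A)} := h.le u.2
    obtain ⟨c, hc⟩ := Submodule.mem_span_singleton.1 hu
    refine ⟨c • v, S.A₁.smul_mem _ v.2, ?_⟩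
    simp [← hc, TensorProduct.smul_tmul]
  | add s t hs ht =>
    obtain ⟨x, hx, e⟩ := hs
    obtain ⟨y, hy, f⟩ := ht
    exact ⟨x + y, add_mem hx hy, by rw [map_add, e, f, TensorProduct.tmul_add]⟩

theorem range_right (S : SuperAlgebra K A) (h : S.A₀ = Submodule.span K {(1 : A)})
    {t : A ⊗[K] A} (ht : t ∈ LinearMap.range (TensorProduct.map S.A₁.subtype S.A₀.subtype)) :
    ∃ x ∈ S.A₁, t = x ⊗ₜ[K] 1 := by
  obtain ⟨s, rfl⟩ := ht
  induction s using TensorProduct.induction_on with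
  | zero => exact ⟨0, zero_mem _, by simp⟩
  | tmul v u =>
    have hu : (u : A) ∈ Submodule.span K {(1 : A)} := h.le u.2
    obtain ⟨c, hc⟩ := Submodule.mem_span_singleton.1 hu
    refine ⟨c • v, S.A₁.smul_mem _ v.2, ?_⟩
    simp [← hc, TensorProduct.smul_tmul]
  | add s t hs ht =>
    obtain ⟨x, hx, e⟩ := hs
    obtain ⟨y, hy, f⟩ := ht
    exact ⟨x + y, add_mem hx hy, by rw [map_add, e, f, TensorProduct.add_tmul]⟩

end SuperAlgebra

theorem SuperBialgebra.primitive {K A : Type*} [Field K] [Ring A] [Algebra K A]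
    (B : SuperBialgebra K A) (h : B.A₀ = Submodule.span K {(1 : A)}) {a : A} (ha : a ∈ B.A₁) :
    B.Δ a = 1 ⊗ₜ[K] a + a ⊗ₜ[K] 1 := by
  obtain ⟨s, hs, t, ht, e⟩ := Submodule.mem_sup.1 (B.Δ_odd a ha)
  obtain ⟨x, hx, rfl⟩ := B.toSuperAlgebra.range_left h hs
  obtain ⟨y, hy, rfl⟩ := B.toSuperAlgebra.range_right h ht
  have h1 := B.counit_left a
  have h2 := B.counit_right a
  rw [← e] at h1 h2
  simp [B.ε_one, B.ε_odd _ hx, B.ε_odd _ hy] at h1 h2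
  rw [← e, h1, h2]

/-- a finite-dimensional connected superbialgebra has dimension at most 2. -/
theorem connected_superbialgebra_finrank_le_two
    {K A : Type*} [Field K] [IsAlgClosed K] [CharZero K] [Ring A] [Algebra K A]
    [FiniteDimensional K A]
    (B : SuperBialgebra K A)
    (hconn : B.A₀ = Submodule.span K {(1 : A)}) :
    Module.finrank K A ≤ 2 := by
  have hmul : ∀ a ∈ B.A₁, ∀ b ∈ B.A₁, a * b = 0 := by
    intro a ha b hb
    have hm := B.mul_mem₁₁ a ha b hb
    rw [hconn] at hm
    obtain ⟨c, hc⟩ := Submodule.mem_span_singleton.1 hm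
    have he := B.ε_mul a b
    rw [← hc, map_smul, B.ε_one, B.ε_odd a ha] at he
    have : c = 0 := by simpa using he
    rw [← hc, this, zero_smul]
  have hcomm : ∀ a ∈ B.A₁, ∀ b ∈ B.A₁, a ⊗ₜ[K] b = b ⊗ₜ[K] a := by
    intro a ha b hb
    have hd := B.Δ_mul a b
    rw [B.primitive hconn ha, B.primitive hconn hb,
      B.toSuperAlgebra.superBimul_prim ha hb, hmul a ha b hb] at hd
    simp only [map_zero, TensorProduct.tmul_zero, TensorProduct.zero_tmul, add_zero] at hd
    rw [zero_sub, neg_add_eq_sub] at hd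
    exact sub_eq_zero.1 hd.symm
  have h0 : Module.finrank K B.A₀ ≤ 1 := by
    rw [hconn]
    exact (finrank_span_le_card _).trans (by simp)
  have h1 : Module.finrank K B.A₁ ≤ 1 := by
    by_cases hz : ∃ a ∈ B.A₁, a ≠ 0
    · obtain ⟨a, ha, hne⟩ := hz
      obtain ⟨f, hf⟩ : ∃ f : A →ₗ[K] K, f a ≠ 0 := by
        by_contra hc
        push Not at hc
        exact hne ((Module.forall_dual_apply_eq_zero_iff K a).1 hc)
      refine finrank_le_one (⟨a, ha⟩ : B.A₁) fun b => ⟨(f a)⁻¹ * f b, ?_⟩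
      have hb := congrArg (fun t => TensorProduct.lid K A
        (TensorProduct.map f (LinearMap.id : A →ₗ[K] A) t)) (hcomm a ha b b.2)
      simp only [TensorProduct.map_tmul, TensorProduct.lid_tmul, LinearMap.id_apply] at hb
      apply Subtype.ext
      change ((f a)⁻¹ * f b) • a = b
      rw [mul_smul, ← hb, smul_smul, inv_mul_cancel₀ hf, one_smul]
    · have : B.A₁ = ⊥ := by
        rw [Submodule.eq_bot_iff]
        intro x hx
        by_contra hne
        exact hz ⟨x, hx, hne⟩
      rw [this]; simp
  have := Submodule.finrank_add_eq_of_isCompl B.compl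
  omega
end

section
/- Let A be a 3-dimensional superalgebra over K with dim A₀ = 2 and dim A₁ = 1, whose even part A₀ is isomorphic as a K-algebra to K[x]/(x²). Then A is isomorphic as a superalgebra to exactly one of the following two superalgebras, with x even and y odd: A_{1|1} = K[x,y]/(x², y², xy) and A_{1|2} = K[x,y]/(x², y² − x, xy); moreover A_{1|1} and A_{1|2} are not isomorphic as superalgebras. -/
open TensorProduct

/-- classification of the 3-dimensional superalgebras with 2-dimensional
even part isomorphic to `K[x]/(x²)`: exactly one of `A_{1|1} = K[x,y]/(x², y², xy)` and
`A_{1|2} = K[x,y]/(x², y² - x, xy)`, with `x` even and `y` odd. -/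
theorem three_dim_superalgebra_even_part_dual_numbers_classification
    {K A : Type*} [Field K] [IsAlgClosed K] [CharZero K] [Ring A] [Algebra K A]
    (S : SuperAlgebra K A)
    (h0 : Module.finrank K S.A₀ = 2)
    (h1 : Module.finrank K S.A₁ = 1)
    (heven : ∃ u ∈ S.A₀, u * u = 0 ∧ LinearIndependent K ![(1 : A), u]) :
    Xor'
      (∃ x y : A, x ∈ S.A₀ ∧ y ∈ S.A₁ ∧
        S.A₀ = Submodule.span K {1, x} ∧ S.A₁ = Submodule.span K {y} ∧
        x * x = 0 ∧ x * y = 0 ∧ y * x = 0 ∧ y * y = 0)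
      (∃ x y : A, x ∈ S.A₀ ∧ y ∈ S.A₁ ∧
        S.A₀ = Submodule.span K {1, x} ∧ S.A₁ = Submodule.span K {y} ∧
        x * x = 0 ∧ x * y = 0 ∧ y * x = 0 ∧ y * y = x) := by
  obtain ⟨u, hu, huu, hli⟩ := heven
  have hfin : Module.Finite K S.A₀ := Module.finite_of_finrank_pos (by omega)
  have hspan : ∀ x ∈ S.A₀, LinearIndependent K ![(1 : A), x] →
      S.A₀ = Submodule.span K {1, x} := by
    intro x hx hl
    symm
    apply Submodule.eq_of_le_of_finrank_eq
    · rw [Submodule.span_le]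
      rintro z (rfl | rfl)
      · exact S.one_mem
      · exact hx
    · have := finrank_span_eq_card hl
      rw [Matrix.range_cons, Matrix.range_cons, Matrix.range_empty, Set.union_empty,
        Set.singleton_union, Fintype.card_fin] at this
      rw [h0]
      exact this
  obtain ⟨⟨y, hy⟩, hy0, hyspan⟩ := finrank_eq_one_iff'.1 h1
  have hy0' : y ≠ 0 := fun h => hy0 (Subtype.ext h)
  have hysp : ∀ w ∈ S.A₁, ∃ c : K, c • y = w := by
    intro w hw
    obtain ⟨c, hc⟩ := hyspan ⟨w, hw⟩
    exact ⟨c, congrArg Subtype.val hc⟩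
  have hA1 : S.A₁ = Submodule.span K {y} := by
    apply le_antisymm
    · intro w hw
      exact Submodule.mem_span_singleton.2 (hysp w hw)
    · rw [Submodule.span_le]
      rintro z rfl
      exact hy
  have hu0 : u ≠ 0 := hli.ne_zero 1
  have huy : u * y = 0 := by
    obtain ⟨c, hc⟩ := hysp _ (S.mul_mem₀₁ u hu y hy)
    have h : u * (u * y) = 0 := by rw [← mul_assoc, huu, zero_mul]
    rw [← hc, mul_smul_comm, ← hc, smul_smul] at h
    rcases smul_eq_zero.1 h with h | h
    · rw [← hc, mul_self_eq_zero.1 h, zero_smul]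
    · exact absurd h hy0'
  have hyu : y * u = 0 := by
    obtain ⟨c, hc⟩ := hysp _ (S.mul_mem₁₀ y hy u hu)
    have h : (y * u) * u = 0 := by rw [mul_assoc, huu, mul_zero]
    rw [← hc, smul_mul_assoc, ← hc, smul_smul] at h
    rcases smul_eq_zero.1 h with h | h
    · rw [← hc, mul_self_eq_zero.1 h, zero_smul]
    · exact absurd h hy0'
  have hyy : ∃ b : K, y * y = b • u := by
    have h := S.mul_mem₁₁ y hy y hy
    rw [hspan u hu hli, Submodule.mem_span_pair] at h
    obtain ⟨a, b, hab⟩ := h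
    have h2 : (y * y) * u = 0 := by rw [mul_assoc, hyu, mul_zero]
    rw [← hab, add_mul, smul_mul_assoc, smul_mul_assoc, huu, one_mul, smul_zero, add_zero] at h2
    have ha : a = 0 := (smul_eq_zero.1 h2).resolve_right hu0
    exact ⟨b, by rw [← hab, ha, zero_smul, zero_add]⟩
  obtain ⟨b, hb⟩ := hyy
  have hno : ∀ x z : A, S.A₀ = Submodule.span K {1, x} → z ∈ S.A₁ → y * y = 0 → z * z = x →
      False := by
    intro x z hx hz h hzz
    obtain ⟨c, rfl⟩ := hysp z hz
    rw [smul_mul_smul_comm, h, smul_zero] at hzz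
    subst hzz
    have h3 : Module.finrank K S.A₀ ≤ 1 := by
      rw [hx, Set.pair_comm, Submodule.span_insert_zero]
      exact (finrank_span_le_card ({1} : Set A)).trans (by simp)
    omega
  by_cases hb0 : b = 0
  · have hyy : y * y = 0 := by rw [hb, hb0, zero_smul]
    left
    refine ⟨⟨u, y, hu, hy, hspan u hu hli, hA1, huu, huy, hyu, hyy⟩, ?_⟩
    rintro ⟨x, z, -, hz, hx, -, -, -, -, hzz⟩
    exact hno x z hx hz hyy hzz
  · right
    have hli' : LinearIndependent K ![(1 : A), b • u] := by
      rw [LinearIndependent.pair_iff] at hli ⊢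
      intro s t hst
      rw [smul_smul] at hst
      obtain ⟨h, h'⟩ := hli _ _ hst
      exact ⟨h, (mul_eq_zero.1 h').resolve_right hb0⟩
    have hbu := S.A₀.smul_mem b hu
    refine ⟨⟨b • u, y, hbu, hy, hspan _ hbu hli', hA1, ?_, ?_, ?_, hb⟩, ?_⟩
    · rw [smul_mul_smul_comm, huu, smul_zero]
    · rw [smul_mul_assoc, huy, smul_zero]
    · rw [mul_smul_comm, hyu, smul_zero]
    · rintro ⟨x, z, -, hz, -, hz1, -, -, -, hzz⟩
      have hyz := hy
      rw [hz1, Submodule.mem_span_singleton] at hyz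
      obtain ⟨c, hc⟩ := hyz
      have : b • u = 0 := by
        rw [← hb, ← hc, smul_mul_smul_comm, hzz, smul_zero]
      exact (smul_ne_zero hb0 hu0) this
end

section
/- Let A be a 3-dimensional superalgebra over K with dim A₀ = 2 and dim A₁ = 1, whose even part A₀ is isomorphic as a K-algebra to K[x]/(x² − x). Then A is isomorphic as a superalgebra to exactly one of the following three pairwise non-isomorphic superalgebras, with x even and y odd: A_{2|1} = K[x,y]/(x² − x, y² − x, xy − y), A_{2|2} = K⟨x,y⟩/(x² − x, y², xy − y, yx), and A_{2|3} = K[x,y]/(x² − x, y², xy − y), where K⟨x,y⟩ denotes the free associative algebra on x and y. -/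
open TensorProduct

/-- The superalgebra `A_{2|1} = K[x,y]/(x² - x, y² - x, xy - y)` (commutative). -/
def IsA21 {K A : Type*} [Field K] [Ring A] [Algebra K A] (S : SuperAlgebra K A) : Prop :=
  ∃ x y : A, x ∈ S.A₀ ∧ y ∈ S.A₁ ∧
    S.A₀ = Submodule.span K {1, x} ∧ S.A₁ = Submodule.span K {y} ∧
    x * x = x ∧ y * y = x ∧ x * y = y ∧ y * x = y

/-- The superalgebra `A_{2|2} = K⟨x,y⟩/(x² - x, y², xy - y, yx)`. -/
def IsA22 {K A : Type*} [Field K] [Ring A] [Algebra K A] (S : SuperAlgebra K A) : Prop :=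
  ∃ x y : A, x ∈ S.A₀ ∧ y ∈ S.A₁ ∧
    S.A₀ = Submodule.span K {1, x} ∧ S.A₁ = Submodule.span K {y} ∧
    x * x = x ∧ y * y = 0 ∧ x * y = y ∧ y * x = 0

/-- The superalgebra `A_{2|3} = K[x,y]/(x² - x, y², xy - y)` (commutative). -/
def IsA23 {K A : Type*} [Field K] [Ring A] [Algebra K A] (S : SuperAlgebra K A) : Prop :=
  ∃ x y : A, x ∈ S.A₀ ∧ y ∈ S.A₁ ∧
    S.A₀ = Submodule.span K {1, x} ∧ S.A₁ = Submodule.span K {y} ∧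
    x * x = x ∧ y * y = 0 ∧ x * y = y ∧ y * x = y

section Helpers

variable {K A : Type*} [Field K] [Ring A] [Algebra K A]

/-- If `u` acts as the identity on the left of the odd generator, we are in one of three cases. -/
lemma super_core [IsAlgClosed K] (S : SuperAlgebra K A) (u y : A) (hu : u ∈ S.A₀)
    (hA0 : S.A₀ = Submodule.span K {1, u}) (hy : y ∈ S.A₁)
    (hA1 : S.A₁ = Submodule.span K {y}) (huu : u * u = u) (huy : u * y = y)
    (hyu : y * u = y ∨ y * u = 0) :
    IsA21 S ∨ IsA22 S ∨ IsA23 S := by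
  have hyy := S.mul_mem₁₁ y hy y hy
  rw [hA0, Submodule.mem_span_pair] at hyy
  obtain ⟨c, d, hcd⟩ := hyy
  have h1 : u * (y * y) = y * y := by rw [← mul_assoc, huy]
  have h2 : y * y = (c + d) • u := by
    rw [← h1, ← hcd, mul_add, mul_smul_comm, mul_smul_comm, huu, mul_one, add_smul]
  rcases hyu with hyu | hyu
  · by_cases he : c + d = 0
    · right; right
      refine ⟨u, y, hu, hy, hA0, hA1, huu, ?_, huy, hyu⟩
      rw [h2, he, zero_smul]
    · left
      obtain ⟨z, hz⟩ := IsAlgClosed.exists_pow_nat_eq (c + d) (n := 2) (by norm_num)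
      have hz0 : z ≠ 0 := by
        rintro rfl
        apply he
        rw [← hz]
        norm_num
      refine ⟨u, z⁻¹ • y, hu, S.A₁.smul_mem _ hy, hA0, ?_, huu, ?_, ?_, ?_⟩
      · rw [hA1, Submodule.span_singleton_smul_eq (IsUnit.mk0 _ (inv_ne_zero hz0))]
      · rw [smul_mul_smul_comm, h2, smul_smul, ← hz]
        have : z⁻¹ * z⁻¹ * z ^ 2 = 1 := by field_simp
        rw [this, one_smul]
      · rw [mul_smul_comm, huy]
      · rw [smul_mul_assoc, hyu]
  · right; left
    refine ⟨u, y, hu, hy, hA0, hA1, huu, ?_, huy, hyu⟩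
    have h3 : y * y * u = 0 := by rw [mul_assoc, hyu, mul_zero]
    rw [h2, smul_mul_assoc, huu] at h3
    rw [h2, h3]

lemma super_ne_zero (S : SuperAlgebra K A) (h1 : Module.finrank K S.A₁ = 1) (y : A)
    (hA1 : S.A₁ = Submodule.span K {y}) : y ≠ 0 := by
  rintro rfl
  rw [hA1, Submodule.span_zero_singleton, finrank_bot] at h1
  exact absurd h1 (by norm_num)

lemma super_sq (S : SuperAlgebra K A) (y z : A)
    (hA1 : S.A₁ = Submodule.span K {z}) (hz : z * z = 0) (hy : y ∈ S.A₁) : y * y = 0 := by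
  rw [hA1, Submodule.mem_span_singleton] at hy
  obtain ⟨c, rfl⟩ := hy
  rw [smul_mul_smul_comm, hz, smul_zero]

lemma super_not_21_22 (S : SuperAlgebra K A) (h1 : Module.finrank K S.A₁ = 1)
    (h : IsA21 S) (h' : IsA22 S) : False := by
  obtain ⟨x, y, hx, hy, hA0, hA1, hxx, hyy, hxy, hyx⟩ := h
  obtain ⟨x', y', hx', hy', hA0', hA1', hxx', hyy', hxy', hyx'⟩ := h'
  apply super_ne_zero S h1 y hA1
  rw [← hxy, ← hyy, super_sq S y y' hA1' hyy' hy, zero_mul]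

lemma super_not_21_23 (S : SuperAlgebra K A) (h1 : Module.finrank K S.A₁ = 1)
    (h : IsA21 S) (h' : IsA23 S) : False := by
  obtain ⟨x, y, hx, hy, hA0, hA1, hxx, hyy, hxy, hyx⟩ := h
  obtain ⟨x', y', hx', hy', hA0', hA1', hxx', hyy', hxy', hyx'⟩ := h'
  apply super_ne_zero S h1 y hA1
  rw [← hxy, ← hyy, super_sq S y y' hA1' hyy' hy, zero_mul]

lemma super_not_22_23 (S : SuperAlgebra K A) (h1 : Module.finrank K S.A₁ = 1)
    (h : IsA22 S) (h' : IsA23 S) : False := by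
  obtain ⟨x, y, hx, hy, hA0, hA1, hxx, hyy, hxy, hyx⟩ := h
  obtain ⟨x', y', hx', hy', hA0', hA1', hxx', hyy', hxy', hyx'⟩ := h'
  apply super_ne_zero S h1 y hA1
  rw [hA1', Submodule.mem_span_singleton] at hy
  rw [hA0', Submodule.mem_span_pair] at hx
  obtain ⟨c, rfl⟩ := hy
  obtain ⟨a, b, rfl⟩ := hx
  rw [← hxy, ← hyx]
  simp [add_mul, mul_add, hxy', hyx', smul_smul, mul_comm]

lemma super_exists [IsAlgClosed K] (S : SuperAlgebra K A)
    (h0 : Module.finrank K S.A₀ = 2)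
    (h1 : Module.finrank K S.A₁ = 1)
    (heven : ∃ u ∈ S.A₀, u * u = u ∧ LinearIndependent K ![(1 : A), u]) :
    IsA21 S ∨ IsA22 S ∨ IsA23 S := by
  obtain ⟨u, hu, huu, hli⟩ := heven
  have hfd : FiniteDimensional K S.A₀ := Module.finite_of_finrank_pos (by omega)
  have hA0 : S.A₀ = Submodule.span K {1, u} := by
    symm
    apply Submodule.eq_of_le_of_finrank_eq
    · rw [Submodule.span_le]
      rintro t (rfl | rfl)
      · exact S.one_mem
      · exact hu
    · have := finrank_span_eq_card hli
      rw [h0]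
      have hr : Set.range ![(1 : A), u] = {1, u} := by
        ext t
        simp [eq_comm, or_comm]
      rw [hr] at this
      simpa using this
  obtain ⟨⟨y, hy⟩, hy0, hgen⟩ := finrank_eq_one_iff'.1 h1
  have hyne : y ≠ 0 := fun h => hy0 (Subtype.ext h)
  have hA1 : S.A₁ = Submodule.span K {y} := by
    apply le_antisymm
    · intro w hw
      obtain ⟨c, hc⟩ := hgen ⟨w, hw⟩
      exact Submodule.mem_span_singleton.2 ⟨c, congrArg Subtype.val hc⟩
    · rw [Submodule.span_singleton_le_iff_mem]
      exact hy
  have idem : ∀ a : K, a • a • y = a • y → a = 0 ∨ a = 1 := by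
    intro a h
    rw [smul_smul] at h
    have h2 := smul_left_injective K hyne h
    by_cases ha : a = 0
    · exact Or.inl ha
    · exact Or.inr (mul_left_cancel₀ ha (by simpa using h2))
  have hl : u * y = 0 ∨ u * y = y := by
    have h := S.mul_mem₀₁ u hu y hy
    rw [hA1, Submodule.mem_span_singleton] at h
    obtain ⟨a, ha⟩ := h
    have h2 : a • a • y = a • y := by
      conv_lhs => rw [ha, ← mul_smul_comm, ha, ← mul_assoc, huu, ← ha]
    rcases idem a h2 with rfl | rfl
    · left; rw [← ha, zero_smul]
    · right; rw [← ha, one_smul]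
  have hr : y * u = 0 ∨ y * u = y := by
    have h := S.mul_mem₁₀ y hy u hu
    rw [hA1, Submodule.mem_span_singleton] at h
    obtain ⟨a, ha⟩ := h
    have h2 : a • a • y = a • y := by
      conv_lhs => rw [ha, ← smul_mul_assoc, ha, mul_assoc, huu, ← ha]
    rcases idem a h2 with rfl | rfl
    · left; rw [← ha, zero_smul]
    · right; rw [← ha, one_smul]
  rcases hl with hl | hl
  · have hA0' : S.A₀ = Submodule.span K {1, 1 - u} := by
      rw [hA0]
      apply le_antisymm <;> rw [Submodule.span_le]
      · rintro t (rfl | rfl)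
        · exact Submodule.subset_span (by simp)
        · exact Submodule.mem_span_pair.2 ⟨1, -1, by simp⟩
      · rintro t (rfl | rfl)
        · exact Submodule.subset_span (by simp)
        · exact Submodule.mem_span_pair.2 ⟨1, -1, by simp [sub_eq_add_neg]⟩
    refine super_core S (1 - u) y (S.A₀.sub_mem S.one_mem hu) hA0' hy hA1 ?_ ?_ ?_
    · simp [sub_mul, mul_sub, huu]
    · simp [sub_mul, hl]
    · rcases hr with hr | hr
      · left; simp [mul_sub, hr]
      · right; simp [mul_sub, hr]
  · exact super_core S u y hu hA0 hy hA1 huu hl hr.symm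

end Helpers

/-- classification of the 3-dimensional superalgebras with 2-dimensional
even part isomorphic to `K[x]/(x² - x)`: exactly one of the three pairwise
non-isomorphic superalgebras `A_{2|1}`, `A_{2|2}`, `A_{2|3}`. -/
theorem three_dim_superalgebra_even_part_KxK_classification
    {K A : Type*} [Field K] [IsAlgClosed K] [CharZero K] [Ring A] [Algebra K A]
    (S : SuperAlgebra K A)
    (h0 : Module.finrank K S.A₀ = 2)
    (h1 : Module.finrank K S.A₁ = 1)
    (heven : ∃ u ∈ S.A₀, u * u = u ∧ LinearIndependent K ![(1 : A), u]) :
    ∃! i : Fin 3, ![IsA21 S, IsA22 S, IsA23 S] i := by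
  have n12 := super_not_21_22 S h1
  have n13 := super_not_21_23 S h1
  have n23 := super_not_22_23 S h1
  rcases super_exists S h0 h1 heven with h | h | h
  · refine ⟨0, h, ?_⟩
    intro j hj
    fin_cases j
    · rfl
    · exact (n12 h hj).elim
    · exact (n13 h hj).elim
  · refine ⟨1, h, ?_⟩
    intro j hj
    fin_cases j
    · exact (n12 hj h).elim
    · rfl
    · exact (n23 h hj).elim
  · refine ⟨2, h, ?_⟩
    intro j hj
    fin_cases j
    · exact (n13 hj h).elim
    · exact (n23 hj h).elim
    · rfl
end

section
/- Every 3-dimensional superbialgebra over K with dim A₀ = 2 (and hence dim A₁ = 1) is isomorphic as a superbialgebra to exactly one of the following eleven pairwise non-isomorphic superbialgebras, each having Δ(1) = 1 ⊗ 1, ε(1) = 1, ε(y) = 0, with x even and y odd. On the superalgebra A_{2|1} = K[x,y]/(x² − x, y² − x, xy − y): (1) Δ(x) = 1 ⊗ x + x ⊗ 1 − x ⊗ x, Δ(y) = y ⊗ 1 + 1 ⊗ y − y ⊗ x, ε(x) = 0; (2) the co-opposite of (1). On A_{2|2} = K⟨x,y⟩/(x² − x, y², xy − y, yx): (3) Δ(x)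 = 1 ⊗ x + x ⊗ 1 − x ⊗ x, Δ(y) = 1 ⊗ y + y ⊗ 1 − y ⊗ x − x ⊗ y, ε(x) = 0; (4) Δ(x) = 1 ⊗ x + x ⊗ 1 − x ⊗ x + y ⊗ y, Δ(y) = 1 ⊗ y + y ⊗ 1 − y ⊗ x − x ⊗ y, ε(x) = 0; (5) Δ(x) = x ⊗ x, Δ(y) = y ⊗ x + x ⊗ y, ε(x) = 1; (6) Δ(x) = x ⊗ x + y ⊗ y, Δ(y) = y ⊗ x + x ⊗ y, ε(x) = 1. On A_{2|3} = K[x,y]/(x² − x, y², xy − y): (7) Δ(x) = 1 ⊗ x + x ⊗ 1 − x ⊗ x, Δ(y) = 1 ⊗ y + y ⊗ 1 − x ⊗ y − y ⊗ x, ε(x) = 0; (8) Δ(x) = 1 ⊗ x + x ⊗ 1 − x ⊗ x, Δ(y) = 1 ⊗ y + y ⊗ 1 − x ⊗ y, ε(x) = 0; (9) the co-opposite of (8); (10) Δ(x) = 1 ⊗ x + x ⊗ 1 − x ⊗ x, Δ(y) = y ⊗ 1 + 1 ⊗ y, ε(x) = 0; (11) Δ(x) = x ⊗ x, Δ(y)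 = y ⊗ x + x ⊗ y, ε(x) = 1. -/
open TensorProduct

/-- `A_{2|1}¹` -/
def B21a {K A : Type*} [Field K] [Ring A] [Algebra K A]
    (B : SuperBialgebra K A) : Prop :=
  ∃ x y : A, x ∈ B.A₀ ∧ y ∈ B.A₁ ∧
    B.A₀ = Submodule.span K {1, x} ∧ B.A₁ = Submodule.span K {y} ∧
    x * x = x ∧ y * y = x ∧ x * y = y ∧ y * x = y ∧
    B.Δ x = 1 ⊗ₜ[K] x + x ⊗ₜ[K] 1 - x ⊗ₜ[K] x ∧
    B.Δ y = y ⊗ₜ[K] 1 + 1 ⊗ₜ[K] y - y ⊗ₜ[K] x ∧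
    B.ε x = 0 ∧ B.ε y = 0

/-- `(A_{2|1}¹)ᶜᵒᵖ` -/
def B21b {K A : Type*} [Field K] [Ring A] [Algebra K A]
    (B : SuperBialgebra K A) : Prop :=
  ∃ x y : A, x ∈ B.A₀ ∧ y ∈ B.A₁ ∧
    B.A₀ = Submodule.span K {1, x} ∧ B.A₁ = Submodule.span K {y} ∧
    x * x = x ∧ y * y = x ∧ x * y = y ∧ y * x = y ∧
    B.Δ x = 1 ⊗ₜ[K] x + x ⊗ₜ[K] 1 - x ⊗ₜ[K] x ∧
    B.Δ y = y ⊗ₜ[K] 1 + 1 ⊗ₜ[K] y - x ⊗ₜ[K] y ∧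
    B.ε x = 0 ∧ B.ε y = 0

/-- `A_{2|2}¹` -/
def B22a {K A : Type*} [Field K] [Ring A] [Algebra K A]
    (B : SuperBialgebra K A) : Prop :=
  ∃ x y : A, x ∈ B.A₀ ∧ y ∈ B.A₁ ∧
    B.A₀ = Submodule.span K {1, x} ∧ B.A₁ = Submodule.span K {y} ∧
    x * x = x ∧ y * y = 0 ∧ x * y = y ∧ y * x = 0 ∧
    B.Δ x = 1 ⊗ₜ[K] x + x ⊗ₜ[K] 1 - x ⊗ₜ[K] x ∧
    B.Δ y = 1 ⊗ₜ[K] y + y ⊗ₜ[K] 1 - y ⊗ₜ[K] x - x ⊗ₜ[K] y ∧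
    B.ε x = 0 ∧ B.ε y = 0

/-- `A_{2|2}²` -/
def B22b {K A : Type*} [Field K] [Ring A] [Algebra K A]
    (B : SuperBialgebra K A) : Prop :=
  ∃ x y : A, x ∈ B.A₀ ∧ y ∈ B.A₁ ∧
    B.A₀ = Submodule.span K {1, x} ∧ B.A₁ = Submodule.span K {y} ∧
    x * x = x ∧ y * y = 0 ∧ x * y = y ∧ y * x = 0 ∧
    B.Δ x = 1 ⊗ₜ[K] x + x ⊗ₜ[K] 1 - x ⊗ₜ[K] x + y ⊗ₜ[K] y ∧
    B.Δ y = 1 ⊗ₜ[K] y + y ⊗ₜ[K] 1 - y ⊗ₜ[K] x - x ⊗ₜ[K] y ∧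
    B.ε x = 0 ∧ B.ε y = 0

/-- `A_{2|2}³` -/
def B22c {K A : Type*} [Field K] [Ring A] [Algebra K A]
    (B : SuperBialgebra K A) : Prop :=
  ∃ x y : A, x ∈ B.A₀ ∧ y ∈ B.A₁ ∧
    B.A₀ = Submodule.span K {1, x} ∧ B.A₁ = Submodule.span K {y} ∧
    x * x = x ∧ y * y = 0 ∧ x * y = y ∧ y * x = 0 ∧
    B.Δ x = x ⊗ₜ[K] x ∧
    B.Δ y = y ⊗ₜ[K] x + x ⊗ₜ[K] y ∧
    B.ε x = 1 ∧ B.ε y = 0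

/-- `A_{2|2}⁴` -/
def B22d {K A : Type*} [Field K] [Ring A] [Algebra K A]
    (B : SuperBialgebra K A) : Prop :=
  ∃ x y : A, x ∈ B.A₀ ∧ y ∈ B.A₁ ∧
    B.A₀ = Submodule.span K {1, x} ∧ B.A₁ = Submodule.span K {y} ∧
    x * x = x ∧ y * y = 0 ∧ x * y = y ∧ y * x = 0 ∧
    B.Δ x = x ⊗ₜ[K] x + y ⊗ₜ[K] y ∧
    B.Δ y = y ⊗ₜ[K] x + x ⊗ₜ[K] y ∧
    B.ε x = 1 ∧ B.ε y = 0

/-- `A_{2|3}¹` -/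
def B23a {K A : Type*} [Field K] [Ring A] [Algebra K A]
    (B : SuperBialgebra K A) : Prop :=
  ∃ x y : A, x ∈ B.A₀ ∧ y ∈ B.A₁ ∧
    B.A₀ = Submodule.span K {1, x} ∧ B.A₁ = Submodule.span K {y} ∧
    x * x = x ∧ y * y = 0 ∧ x * y = y ∧ y * x = y ∧
    B.Δ x = 1 ⊗ₜ[K] x + x ⊗ₜ[K] 1 - x ⊗ₜ[K] x ∧
    B.Δ y = 1 ⊗ₜ[K] y + y ⊗ₜ[K] 1 - x ⊗ₜ[K] y - y ⊗ₜ[K] x ∧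
    B.ε x = 0 ∧ B.ε y = 0

/-- `A_{2|3}²` -/
def B23b {K A : Type*} [Field K] [Ring A] [Algebra K A]
    (B : SuperBialgebra K A) : Prop :=
  ∃ x y : A, x ∈ B.A₀ ∧ y ∈ B.A₁ ∧
    B.A₀ = Submodule.span K {1, x} ∧ B.A₁ = Submodule.span K {y} ∧
    x * x = x ∧ y * y = 0 ∧ x * y = y ∧ y * x = y ∧
    B.Δ x = 1 ⊗ₜ[K] x + x ⊗ₜ[K] 1 - x ⊗ₜ[K] x ∧
    B.Δ y = 1 ⊗ₜ[K] y + y ⊗ₜ[K] 1 - x ⊗ₜ[K] y ∧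
    B.ε x = 0 ∧ B.ε y = 0

/-- `(A_{2|3}²)ᶜᵒᵖ` -/
def B23c {K A : Type*} [Field K] [Ring A] [Algebra K A]
    (B : SuperBialgebra K A) : Prop :=
  ∃ x y : A, x ∈ B.A₀ ∧ y ∈ B.A₁ ∧
    B.A₀ = Submodule.span K {1, x} ∧ B.A₁ = Submodule.span K {y} ∧
    x * x = x ∧ y * y = 0 ∧ x * y = y ∧ y * x = y ∧
    B.Δ x = 1 ⊗ₜ[K] x + x ⊗ₜ[K] 1 - x ⊗ₜ[K] x ∧
    B.Δ y = 1 ⊗ₜ[K] y + y ⊗ₜ[K] 1 - y ⊗ₜ[K] x ∧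
    B.ε x = 0 ∧ B.ε y = 0

/-- `A_{2|3}⁴` -/
def B23d {K A : Type*} [Field K] [Ring A] [Algebra K A]
    (B : SuperBialgebra K A) : Prop :=
  ∃ x y : A, x ∈ B.A₀ ∧ y ∈ B.A₁ ∧
    B.A₀ = Submodule.span K {1, x} ∧ B.A₁ = Submodule.span K {y} ∧
    x * x = x ∧ y * y = 0 ∧ x * y = y ∧ y * x = y ∧
    B.Δ x = 1 ⊗ₜ[K] x + x ⊗ₜ[K] 1 - x ⊗ₜ[K] x ∧
    B.Δ y = y ⊗ₜ[K] 1 + 1 ⊗ₜ[K] y ∧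
    B.ε x = 0 ∧ B.ε y = 0

/-- `A_{2|3}⁵` -/
def B23e {K A : Type*} [Field K] [Ring A] [Algebra K A]
    (B : SuperBialgebra K A) : Prop :=
  ∃ x y : A, x ∈ B.A₀ ∧ y ∈ B.A₁ ∧
    B.A₀ = Submodule.span K {1, x} ∧ B.A₁ = Submodule.span K {y} ∧
    x * x = x ∧ y * y = 0 ∧ x * y = y ∧ y * x = y ∧
    B.Δ x = x ⊗ₜ[K] x ∧
    B.Δ y = y ⊗ₜ[K] x + x ⊗ₜ[K] y ∧
    B.ε x = 1 ∧ B.ε y = 0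


section Helpers

set_option linter.unusedSimpArgs false

variable {K A : Type*} [Field K] [Ring A] [Algebra K A]

lemma SA.p₀_even (S : SuperAlgebra K A) {a : A} (h : a ∈ S.A₀) : S.p₀ a = a := by
  have := Submodule.projectionOnto_apply_left S.compl ⟨a, h⟩
  exact congrArg Subtype.val this

lemma SA.p₀_odd (S : SuperAlgebra K A) {a : A} (h : a ∈ S.A₁) : S.p₀ a = 0 := by
  have := Submodule.projectionOnto_apply_right S.compl ⟨a, h⟩
  exact congrArg Subtype.val this

lemma SA.p₁_odd (S : SuperAlgebra K A) {a : A} (h : a ∈ S.A₁) : S.p₁ a = a := by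
  have := Submodule.projectionOnto_apply_left S.compl.symm ⟨a, h⟩
  exact congrArg Subtype.val this

lemma SA.p₁_even (S : SuperAlgebra K A) {a : A} (h : a ∈ S.A₀) : S.p₁ a = 0 := by
  have := Submodule.projectionOnto_apply_right S.compl.symm ⟨a, h⟩
  exact congrArg Subtype.val this

lemma SA.bimul_gen (S : SuperAlgebra K A) {b c : A} (s : K)
    (h : S.τ (b ⊗ₜ[K] c) = s • (c ⊗ₜ[K] b)) (a d : A) :
    S.superBimul ((a ⊗ₜ[K] b) ⊗ₜ[K] (c ⊗ₜ[K] d)) = s • ((a * c) ⊗ₜ[K] (b * d)) := by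
  simp [SuperAlgebra.superBimul, SuperAlgebra.rearr, h, TensorProduct.tmul_smul,
    TensorProduct.smul_tmul']

lemma SA.bimul₀₀ (S : SuperAlgebra K A) {b c : A} (hb : b ∈ S.A₀) (hc : c ∈ S.A₀) (a d : A) :
    S.superBimul ((a ⊗ₜ[K] b) ⊗ₜ[K] (c ⊗ₜ[K] d)) = (a * c) ⊗ₜ[K] (b * d) := by
  rw [SA.bimul_gen S 1 _ a d, one_smul]
  simp [SuperAlgebra.τ, SA.p₀_even S hb, SA.p₀_even S hc, SA.p₁_even S hb, SA.p₁_even S hc]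

lemma SA.bimul₀₁ (S : SuperAlgebra K A) {b c : A} (hb : b ∈ S.A₀) (hc : c ∈ S.A₁) (a d : A) :
    S.superBimul ((a ⊗ₜ[K] b) ⊗ₜ[K] (c ⊗ₜ[K] d)) = (a * c) ⊗ₜ[K] (b * d) := by
  rw [SA.bimul_gen S 1 _ a d, one_smul]
  simp [SuperAlgebra.τ, SA.p₀_even S hb, SA.p₀_odd S hc, SA.p₁_even S hb, SA.p₁_odd S hc]

lemma SA.bimul₁₀ (S : SuperAlgebra K A) {b c : A} (hb : b ∈ S.A₁) (hc : c ∈ S.A₀) (a d : A) :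
    S.superBimul ((a ⊗ₜ[K] b) ⊗ₜ[K] (c ⊗ₜ[K] d)) = (a * c) ⊗ₜ[K] (b * d) := by
  rw [SA.bimul_gen S 1 _ a d, one_smul]
  simp [SuperAlgebra.τ, SA.p₀_odd S hb, SA.p₀_even S hc, SA.p₁_odd S hb, SA.p₁_even S hc]

lemma SA.bimul₁₁ (S : SuperAlgebra K A) {b c : A} (hb : b ∈ S.A₁) (hc : c ∈ S.A₁) (a d : A) :
    S.superBimul ((a ⊗ₜ[K] b) ⊗ₜ[K] (c ⊗ₜ[K] d)) = -((a * c) ⊗ₜ[K] (b * d)) := by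
  rw [SA.bimul_gen S (-1) _ a d, neg_one_smul]
  simp [SuperAlgebra.τ, SA.p₀_odd S hb, SA.p₀_odd S hc, SA.p₁_odd S hb, SA.p₁_odd S hc]

/-- evaluation of a pair of functionals on `A ⊗ A` -/
noncomputable def T2 (φ ψ : A →ₗ[K] K) : A ⊗[K] A →ₗ[K] K :=
  LinearMap.mul' K K ∘ₗ TensorProduct.map φ ψ

/-- evaluation of a triple of functionals on `A ⊗ (A ⊗ A)` -/
noncomputable def T3 (φ ψ χ : A →ₗ[K] K) : A ⊗[K] (A ⊗[K] A) →ₗ[K] K :=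
  LinearMap.mul' K K ∘ₗ TensorProduct.map φ (T2 ψ χ)

@[simp] lemma T2_tmul (φ ψ : A →ₗ[K] K) (a b : A) : T2 φ ψ (a ⊗ₜ[K] b) = φ a * ψ b := by
  simp [T2]

@[simp] lemma T3_tmul (φ ψ χ : A →ₗ[K] K) (a b c : A) :
    T3 φ ψ χ (a ⊗ₜ[K] (b ⊗ₜ[K] c)) = φ a * (ψ b * χ c) := by
  simp [T3]

lemma range_pair (P Q : Submodule K A) (a b c d : A)
    (hP : ∀ p ∈ P, ∃ s t : K, p = s • a + t • b) (hQ : ∀ p ∈ Q, ∃ s t : K, p = s • c + t • d)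
    (z : A ⊗[K] A) (hz : z ∈ LinearMap.range (TensorProduct.map P.subtype Q.subtype)) :
    ∃ r₁ r₂ r₃ r₄ : K, z = r₁ • (a ⊗ₜ[K] c) + r₂ • (a ⊗ₜ[K] d) + r₃ • (b ⊗ₜ[K] c)
      + r₄ • (b ⊗ₜ[K] d) := by
  obtain ⟨w, rfl⟩ := hz
  induction w using TensorProduct.induction_on with
  | zero => exact ⟨0, 0, 0, 0, by simp⟩
  | tmul p q =>
    obtain ⟨s, t, h⟩ := hP p p.2
    obtain ⟨s', t', h'⟩ := hQ q q.2
    refine ⟨s * s', s * t', t * s', t * t', ?_⟩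
    simp only [TensorProduct.map_tmul, Submodule.subtype_apply]
    rw [h, h']
    simp only [TensorProduct.add_tmul, TensorProduct.tmul_add, TensorProduct.tmul_smul,
      ← TensorProduct.smul_tmul', smul_smul]
    module
  | add v w hv hw =>
    obtain ⟨a1, a2, a3, a4, h⟩ := hv
    obtain ⟨b1, b2, b3, b4, h'⟩ := hw
    refine ⟨a1 + b1, a2 + b2, a3 + b3, a4 + b4, ?_⟩
    rw [map_add, h, h']
    module

/-- A spanning set adapted to the grading. -/
structure Adapted (B : SuperBialgebra K A) (x y : A) (f g h : A →ₗ[K] K) : Prop where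
  hx : x ∈ B.A₀
  hy : y ∈ B.A₁
  s0 : B.A₀ = Submodule.span K {1, x}
  s1 : B.A₁ = Submodule.span K {y}
  f1 : f 1 = 1
  fx : f x = 0
  fy : f y = 0
  g1 : g 1 = 0
  gx : g x = 1
  gy : g y = 0
  h1 : h 1 = 0
  hhx : h x = 0
  hhy : h y = 1

lemma exists_adapted (B : SuperBialgebra K A) (hA : Module.finrank K A = 3) {x y : A}
    (s0 : B.A₀ = Submodule.span K {1, x}) (s1 : B.A₁ = Submodule.span K {y}) :
    ∃ f g h, Adapted B x y f g h := by
  have htop : ⊤ ≤ Submodule.span K (Set.range ![(1 : A), x, y]) := by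
    rw [← B.compl.sup_eq_top, s0, s1, ← Submodule.span_union]
    apply Submodule.span_mono
    intro z hz
    simp only [Set.mem_union, Set.mem_insert_iff, Set.mem_singleton_iff] at hz
    rcases hz with (h | h) | h
    · exact ⟨0, by simp [h]⟩
    · exact ⟨1, by simp [h]⟩
    · exact ⟨2, by simp [h]⟩
  let e := basisOfTopLeSpanOfCardEqFinrank ![(1 : A), x, y] htop (by simp [hA])
  have he : ∀ i, e i = ![(1 : A), x, y] i := fun i => by
    simp [e]
  have e0 : e 0 = 1 := by simp [he]
  have e1 : e 1 = x := by simp [he]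
  have e2 : e 2 = y := by simp [he]
  have key : ∀ i j, e.coord i (e j) = if j = i then 1 else 0 := fun i j => by
    simp [Finsupp.single_apply]
  refine ⟨e.coord 0, e.coord 1, e.coord 2, ?_, ?_, s0, s1, ?_, ?_, ?_, ?_, ?_, ?_, ?_, ?_, ?_⟩
  · rw [s0]; exact Submodule.subset_span (by simp)
  · rw [s1]; exact Submodule.subset_span (by simp)
  · rw [← e0, key]; simp
  · rw [← e1, key]; simp
  · rw [← e2, key]; simp
  · rw [← e0, key]; simp
  · rw [← e1, key]; simp
  · rw [← e2, key]; simp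
  · rw [← e0, key]; simp
  · rw [← e1, key]; simp
  · rw [← e2, key]; simp

/-- Structure constants. -/
structure Good (B : SuperBialgebra K A) (u y : A) (n a b q α β γ δ : K) : Prop where
  s0 : B.A₀ = Submodule.span K {1, u}
  s1 : B.A₁ = Submodule.span K {y}
  εu : B.ε u = 0
  uu : u * u = n • u
  uy : u * y = a • y
  yu : y * u = b • y
  yy : y * y = q • u
  Δu : B.Δ u = 1 ⊗ₜ[K] u + u ⊗ₜ[K] 1 + α • (u ⊗ₜ[K] u) + β • (y ⊗ₜ[K] y)
  Δy : B.Δ y = 1 ⊗ₜ[K] y + y ⊗ₜ[K] 1 + γ • (u ⊗ₜ[K] y) + δ • (y ⊗ₜ[K] u)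

lemma exists_good (B : SuperBialgebra K A) (hA : Module.finrank K A = 3) {u y : A}
    (s0 : B.A₀ = Submodule.span K {1, u}) (s1 : B.A₁ = Submodule.span K {y})
    (hε : B.ε u = 0) : ∃ n a b q α β γ δ, Good B u y n a b q α β γ δ := by
  obtain ⟨f, g, h, ad⟩ := exists_adapted B hA s0 s1
  obtain ⟨hu, hy, -, -, f1, fx, fy, g1, gx, gy, h1, hhx, hhy⟩ := ad
  have m0 : ∀ p ∈ B.A₀, ∃ s t : K, p = s • 1 + t • u := fun p hp => by
    rw [s0] at hp
    obtain ⟨s, t, h⟩ := Submodule.mem_span_pair.1 hp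
    exact ⟨s, t, h.symm⟩
  have m1 : ∀ p ∈ B.A₁, ∃ s t : K, p = s • y + t • 0 := fun p hp => by
    rw [s1] at hp
    obtain ⟨s, h⟩ := Submodule.mem_span_singleton.1 hp
    exact ⟨s, 0, by rw [← h]; simp⟩
  have εy := B.ε_odd y hy
  obtain ⟨s, n, huu⟩ := m0 _ (B.mul_mem₀₀ u hu u hu)
  have hs : s = 0 := by
    have := congrArg B.ε huu
    rw [B.ε_mul, hε] at this
    simpa [B.ε_one, hε] using this.symm
  obtain ⟨s', q, hyy⟩ := m0 _ (B.mul_mem₁₁ y hy y hy)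
  have hs' : s' = 0 := by
    have := congrArg B.ε hyy
    rw [B.ε_mul, εy] at this
    simpa [B.ε_one, hε] using this.symm
  obtain ⟨a, _, huy⟩ := m1 _ (B.mul_mem₀₁ u hu y hy)
  obtain ⟨b, _, hyu⟩ := m1 _ (B.mul_mem₁₀ y hy u hu)
  obtain ⟨v, hv, w, hw, hΔu⟩ := Submodule.mem_sup.1 (B.Δ_even u hu)
  obtain ⟨v', hv', w', hw', hΔy⟩ := Submodule.mem_sup.1 (B.Δ_odd y hy)
  obtain ⟨r₁, r₂, r₃, α, rfl⟩ := range_pair _ _ _ _ _ _ m0 m0 _ hv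
  obtain ⟨β, _, _, _, rfl⟩ := range_pair _ _ _ _ _ _ m1 m1 _ hw
  obtain ⟨t₁, _, γ, _, rfl⟩ := range_pair _ _ _ _ _ _ m0 m1 _ hv'
  obtain ⟨t₂, δ, _, _, rfl⟩ := range_pair _ _ _ _ _ _ m1 m0 _ hw'
  have L := B.counit_left u
  have R := B.counit_right u
  have L' := B.counit_left y
  have R' := B.counit_right y
  rw [← hΔu] at L R
  rw [← hΔy] at L' R'
  simp [B.ε_one, hε, εy] at L R L' R'
  have e1 := congrArg f L
  have e2 := congrArg g L
  have e3 := congrArg g R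
  have e4 := congrArg h L'
  have e5 := congrArg h R'
  simp [f1, fx, fy, g1, gx, gy, h1, hhx, hhy] at e1 e2 e3 e4 e5
  subst e1 e2 e3 e4 e5 hs hs'
  refine ⟨n, a, b, q, α, β, γ, δ, s0, s1, hε, by simpa using huu, by simpa using huy,
    by simpa using hyu, by simpa using hyy, ?_, ?_⟩
  · rw [← hΔu]; simp
  · rw [← hΔy]; simp; abel

set_option maxHeartbeats 2000000 in
lemma good_eqs (B : SuperBialgebra K A) (hA : Module.finrank K A = 3) {u y : A}
    {n a b q α β γ δ : K} (G : Good B u y n a b q α β γ δ) :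
    (a * a = n * a ∧ b * b = n * b ∧ q * a = q * b ∧ q * n = q * a) ∧
    (2 + 4 * α * n + α ^ 2 * n ^ 2 - β ^ 2 * q ^ 2 = n * α ∧
      β * (2 * (a + b) + α * (a ^ 2 + b ^ 2)) = n * β) ∧
    (1 + γ * n + α * a + α * γ * n * a - β * q - β * δ * q * b = 0 ∧
      1 + δ * n + α * a + α * δ * n * a + β * q + β * γ * q * b = 0) ∧
    (1 + γ * n + α * b + α * γ * n * b + β * q + β * δ * q * a = 0 ∧
      1 + δ * n + α * b + α * δ * n * b - β * q - β * γ * q * a = 0) ∧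
    (2 * γ * q + 2 * δ * q + n * q * (γ ^ 2 + δ ^ 2) = q * α ∧
      (δ - γ) * (a - b) = q * β) ∧
    (γ * α = γ ^ 2 ∧ δ * α = δ ^ 2) := by
  obtain ⟨f, g, h, ad⟩ := exists_adapted B hA G.s0 G.s1
  obtain ⟨s0, s1, εu, uu, uy, yu, yy, Δu, Δy⟩ := G
  obtain ⟨hu, hy, -, -, f1, fx, fy, g1, gx, gy, h1, hhx, hhy⟩ := ad
  have ho := B.one_mem
  refine ⟨⟨?_, ?_, ?_, ?_⟩, ?_, ?_, ?_, ?_, ?_⟩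
  · have := congrArg h (mul_assoc u u y)
    simp [uu, uy, hhy] at this
    grind
  · have := congrArg h (mul_assoc y u u)
    simp [uu, yu, hhy] at this
    grind
  · have := congrArg h (mul_assoc y y y)
    simp [yy, yu, uy, hhy] at this
    grind
  · have := congrArg g (mul_assoc u y y)
    simp [yy, uu, uy, gx] at this
    grind
  · have E := B.Δ_mul u u
    rw [uu, map_smul, Δu] at E
    simp only [TensorProduct.add_tmul, TensorProduct.tmul_add, TensorProduct.tmul_smul,
      ← TensorProduct.smul_tmul', map_add, map_smul, SA.bimul₀₀ _ ho ho, SA.bimul₀₀ _ ho hu,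
      SA.bimul₀₀ _ hu ho, SA.bimul₀₀ _ hu hu, SA.bimul₀₁ _ ho hy, SA.bimul₀₁ _ hu hy,
      SA.bimul₁₀ _ hy ho, SA.bimul₁₀ _ hy hu, SA.bimul₁₁ _ hy hy, mul_one, one_mul,
      uu, uy, yu, yy] at E
    have c1 := congrArg (T2 g g) E
    have c2 := congrArg (T2 h h) E
    simp [g1, gx, gy, h1, hhx, hhy, -mul_eq_mul_left_iff, -mul_eq_mul_right_iff] at c1 c2
    constructor
    · linear_combination -c1
    · linear_combination -c2
  · have E := B.Δ_mul u y
    rw [uy, map_smul, Δu, Δy] at E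
    simp only [TensorProduct.add_tmul, TensorProduct.tmul_add, TensorProduct.tmul_smul,
      ← TensorProduct.smul_tmul', map_add, map_smul, SA.bimul₀₀ _ ho ho, SA.bimul₀₀ _ ho hu,
      SA.bimul₀₀ _ hu ho, SA.bimul₀₀ _ hu hu, SA.bimul₀₁ _ ho hy, SA.bimul₀₁ _ hu hy,
      SA.bimul₁₀ _ hy ho, SA.bimul₁₀ _ hy hu, SA.bimul₁₁ _ hy hy, mul_one, one_mul,
      uu, uy, yu, yy] at E
    have c1 := congrArg (T2 g h) E
    have c2 := congrArg (T2 h g) E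
    simp [g1, gx, gy, h1, hhx, hhy, -mul_eq_mul_left_iff, -mul_eq_mul_right_iff] at c1 c2
    constructor
    · linear_combination -c1
    · linear_combination -c2
  · have E := B.Δ_mul y u
    rw [yu, map_smul, Δu, Δy] at E
    simp only [TensorProduct.add_tmul, TensorProduct.tmul_add, TensorProduct.tmul_smul,
      ← TensorProduct.smul_tmul', map_add, map_smul, SA.bimul₀₀ _ ho ho, SA.bimul₀₀ _ ho hu,
      SA.bimul₀₀ _ hu ho, SA.bimul₀₀ _ hu hu, SA.bimul₀₁ _ ho hy, SA.bimul₀₁ _ hu hy,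
      SA.bimul₁₀ _ hy ho, SA.bimul₁₀ _ hy hu, SA.bimul₁₁ _ hy hy, mul_one, one_mul,
      uu, uy, yu, yy] at E
    have c1 := congrArg (T2 g h) E
    have c2 := congrArg (T2 h g) E
    simp [g1, gx, gy, h1, hhx, hhy, -mul_eq_mul_left_iff, -mul_eq_mul_right_iff] at c1 c2
    constructor
    · linear_combination -c1
    · linear_combination -c2
  · have E := B.Δ_mul y y
    rw [yy, map_smul, Δu, Δy] at E
    simp only [TensorProduct.add_tmul, TensorProduct.tmul_add, TensorProduct.tmul_smul,
      ← TensorProduct.smul_tmul', map_add, map_smul, SA.bimul₀₀ _ ho ho, SA.bimul₀₀ _ ho hu,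
      SA.bimul₀₀ _ hu ho, SA.bimul₀₀ _ hu hu, SA.bimul₀₁ _ ho hy, SA.bimul₀₁ _ hu hy,
      SA.bimul₁₀ _ hy ho, SA.bimul₁₀ _ hy hu, SA.bimul₁₁ _ hy hy, mul_one, one_mul,
      uu, uy, yu, yy] at E
    have c1 := congrArg (T2 g g) E
    have c2 := congrArg (T2 h h) E
    simp [g1, gx, gy, h1, hhx, hhy, -mul_eq_mul_left_iff, -mul_eq_mul_right_iff] at c1 c2
    constructor
    · linear_combination -c1
    · linear_combination -c2
  · have E := B.coassoc y
    rw [Δy] at E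
    simp only [map_add, map_smul, TensorProduct.map_tmul, Δu, Δy, B.Δ_one, LinearMap.id_apply,
      TensorProduct.add_tmul, TensorProduct.tmul_add, TensorProduct.tmul_smul,
      ← TensorProduct.smul_tmul', TensorProduct.assoc_tmul] at E
    have c1 := congrArg (T3 g g h) E
    have c2 := congrArg (T3 h g g) E
    simp [g1, gx, gy, h1, hhx, hhy, -mul_eq_mul_left_iff, -mul_eq_mul_right_iff] at c1 c2
    constructor
    · linear_combination c1
    · linear_combination -c2

end Helpers

section Helpers2

variable {K A : Type*} [Field K] [Ring A] [Algebra K A]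

lemma span0_eq (B : SuperBialgebra K A) (hA : Module.finrank K A = 3)
    (h0 : Module.finrank K B.A₀ = 2) {u : A} (hu : u ∈ B.A₀) (hne : u ≠ 0) (hε : B.ε u = 0) :
    B.A₀ = Submodule.span K {1, u} := by
  have : Module.Finite K A := Module.finite_of_finrank_pos (by omega)
  symm
  apply Submodule.eq_of_le_of_finrank_eq
  · rw [Submodule.span_le]
    rintro z (rfl | rfl)
    · exact B.one_mem
    · exact hu
  · have li : LinearIndependent K ![(1 : A), u] := by
      rw [LinearIndependent.pair_iff]
      intro s t hst
      have hs : s = 0 := by simpa [B.ε_one, hε] using congrArg B.ε hst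
      subst hs
      simpa [hne] using hst
    have := finrank_span_eq_card li
    rw [Matrix.range_cons_cons_empty] at this
    rw [this, h0]; simp

lemma exists_u (B : SuperBialgebra K A)
    (h0 : Module.finrank K B.A₀ = 2) : ∃ u ∈ B.A₀, u ≠ 0 ∧ B.ε u = 0 := by
  by_contra! hcon
  have : ∀ v ∈ B.A₀, v = B.ε v • (1 : A) := by
    intro v hv
    by_contra hne
    apply hcon (v - B.ε v • 1) (B.A₀.sub_mem hv (B.A₀.smul_mem _ B.one_mem)) (sub_ne_zero.2 hne)
    simp [B.ε_one]
  have : Module.finrank K B.A₀ ≤ 1 := by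
    apply finrank_le_one (⟨1, B.one_mem⟩ : B.A₀)
    intro w
    exact ⟨B.ε w, Subtype.ext (this w w.2).symm⟩
  omega

lemma exists_y (B : SuperBialgebra K A) (hA : Module.finrank K A = 3)
    (h0 : Module.finrank K B.A₀ = 2) : ∃ y, B.A₁ = Submodule.span K {y} := by
  have : Module.Finite K A := Module.finite_of_finrank_pos (by omega)
  have h := Submodule.finrank_add_eq_of_isCompl B.compl
  have h1 : Module.finrank K B.A₁ = 1 := by omega
  obtain ⟨v, -, hv⟩ := finrank_eq_one_iff'.1 h1
  refine ⟨v, le_antisymm ?_ ?_⟩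
  · intro w hw
    obtain ⟨c, hc⟩ := hv ⟨w, hw⟩
    exact Submodule.mem_span_singleton.2 ⟨c, congrArg Subtype.val hc⟩
  · rw [Submodule.span_singleton_le_iff_mem]; exact v.2

lemma scal_n [CharZero K] {n a b q α β γ δ : K}
    (h : (a * a = n * a ∧ b * b = n * b ∧ q * a = q * b ∧ q * n = q * a) ∧
    (2 + 4 * α * n + α ^ 2 * n ^ 2 - β ^ 2 * q ^ 2 = n * α ∧
      β * (2 * (a + b) + α * (a ^ 2 + b ^ 2)) = n * β) ∧
    (1 + γ * n + α * a + α * γ * n * a - β * q - β * δ * q * b = 0 ∧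
      1 + δ * n + α * a + α * δ * n * a + β * q + β * γ * q * b = 0) ∧
    (1 + γ * n + α * b + α * γ * n * b + β * q + β * δ * q * a = 0 ∧
      1 + δ * n + α * b + α * δ * n * b - β * q - β * γ * q * a = 0) ∧
    (2 * γ * q + 2 * δ * q + n * q * (γ ^ 2 + δ ^ 2) = q * α ∧
      (δ - γ) * (a - b) = q * β) ∧
    (γ * α = γ ^ 2 ∧ δ * α = δ ^ 2)) : n ≠ 0 := by
  rintro rfl
  obtain ⟨⟨h1, h2, -, -⟩, -, ⟨h3, h4⟩, -⟩ := h
  have ha : a = 0 := by simpa using h1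
  have hb : b = 0 := by simpa using h2
  subst ha hb
  have : (2 : K) = 0 := by linear_combination h3 + h4
  exact two_ne_zero this

lemma scal_sol [CharZero K] {a b q α β γ δ : K}
    (h : (a * a = 1 * a ∧ b * b = 1 * b ∧ q * a = q * b ∧ q * 1 = q * a) ∧
    (2 + 4 * α * 1 + α ^ 2 * 1 ^ 2 - β ^ 2 * q ^ 2 = 1 * α ∧
      β * (2 * (a + b) + α * (a ^ 2 + b ^ 2)) = 1 * β) ∧
    (1 + γ * 1 + α * a + α * γ * 1 * a - β * q - β * δ * q * b = 0 ∧
      1 + δ * 1 + α * a + α * δ * 1 * a + β * q + β * γ * q * b = 0) ∧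
    (1 + γ * 1 + α * b + α * γ * 1 * b + β * q + β * δ * q * a = 0 ∧
      1 + δ * 1 + α * b + α * δ * 1 * b - β * q - β * γ * q * a = 0) ∧
    (2 * γ * q + 2 * δ * q + 1 * q * (γ ^ 2 + δ ^ 2) = q * α ∧
      (δ - γ) * (a - b) = q * β) ∧
    (γ * α = γ ^ 2 ∧ δ * α = δ ^ 2)) :
    α = -1 ∧
    ((a = 1 ∧ b = 1 ∧ β = 0 ∧ q ≠ 0 ∧ γ = 0 ∧ δ = -1) ∨
     (a = 1 ∧ b = 1 ∧ β = 0 ∧ q ≠ 0 ∧ γ = -1 ∧ δ = 0) ∨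
     (a = 1 ∧ b = 0 ∧ q = 0 ∧ γ = -1 ∧ δ = -1) ∨
     (a = 0 ∧ b = 1 ∧ q = 0 ∧ γ = -1 ∧ δ = -1) ∨
     (a = 1 ∧ b = 1 ∧ β = 0 ∧ q = 0 ∧ γ = -1 ∧ δ = -1) ∨
     (a = 1 ∧ b = 1 ∧ β = 0 ∧ q = 0 ∧ γ = -1 ∧ δ = 0) ∨
     (a = 1 ∧ b = 1 ∧ β = 0 ∧ q = 0 ∧ γ = 0 ∧ δ = -1) ∨
     (a = 1 ∧ b = 1 ∧ β = 0 ∧ q = 0 ∧ γ = 0 ∧ δ = 0) ∨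
     (a = 0 ∧ b = 0 ∧ β = 0 ∧ q = 0 ∧ γ = -1 ∧ δ = -1)) := by
  obtain ⟨⟨h1, h2, h3, h4⟩, ⟨h5, h6⟩, ⟨h7, h8⟩, ⟨h9, h10⟩, ⟨h11, h12⟩, h13, h14⟩ := h
  have ha : a = 0 ∨ a = 1 := by grind
  have hb : b = 0 ∨ b = 1 := by grind
  have hβq : β * q = 0 := by rcases ha with rfl | rfl <;> rcases hb with rfl | rfl <;> grind
  have hα2 : α = -1 ∨ α = -2 := by
    have : (α + 1) * (α + 2) = 0 := by linear_combination h5 + β * q * hβq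
    rcases mul_eq_zero.1 this with h | h
    · left; linear_combination h
    · right; linear_combination h
  have hα : α = -1 := by
    rcases hα2 with h | h
    · exact h
    · exfalso
      subst h
      rcases ha with rfl | rfl <;> rcases hb with rfl | rfl <;> grind
  subst hα
  refine ⟨rfl, ?_⟩
  have hγ : γ = 0 ∨ γ = -1 := by
    have : γ * (γ + 1) = 0 := by linear_combination -h13
    rcases mul_eq_zero.1 this with h | h
    · left; exact h
    · right; linear_combination h
  have hδ : δ = 0 ∨ δ = -1 := by
    have : δ * (δ + 1) = 0 := by linear_combination -h14
    rcases mul_eq_zero.1 this with h | h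
    · left; exact h
    · right; linear_combination h
  by_cases hq : q = 0
  · subst hq
    rcases ha with rfl | rfl <;> rcases hb with rfl | rfl <;> rcases hγ with rfl | rfl <;>
    rcases hδ with rfl | rfl <;> grind
  · have hβ : β = 0 := by grind
    subst hβ
    rcases ha with rfl | rfl <;> rcases hb with rfl | rfl <;> rcases hγ with rfl | rfl <;>
    rcases hδ with rfl | rfl <;> grind

lemma span_flip (u : A) : Submodule.span K {1, u} = Submodule.span K {1, 1 - u} := by
  apply le_antisymm <;> rw [Submodule.span_le] <;> rintro z (rfl | rfl)
  · exact Submodule.subset_span (by simp)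
  · exact Submodule.mem_span_pair.2 ⟨1, -1, by module⟩
  · exact Submodule.subset_span (by simp)
  · exact Submodule.mem_span_pair.2 ⟨1, -1, by module⟩

lemma span_scale (y : A) {t : K} (ht : t ≠ 0) :
    Submodule.span K {y} = Submodule.span K {t • y} :=
  (Submodule.span_singleton_smul_eq (IsUnit.mk0 t ht) y).symm

lemma classify_exists [IsAlgClosed K] [CharZero K] (B : SuperBialgebra K A)
    (hA : Module.finrank K A = 3) (h0 : Module.finrank K B.A₀ = 2) :
    B21a B ∨ B21b B ∨ B22a B ∨ B22b B ∨ B22c B ∨ B22d B ∨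
        B23a B ∨ B23b B ∨ B23c B ∨ B23d B ∨ B23e B := by
  obtain ⟨u₀, hu₀, hne₀, hε₀⟩ := exists_u B h0
  obtain ⟨y, s1⟩ := exists_y B hA h0
  obtain ⟨n, a₀, b₀, q₀, α₀, β₀, γ₀, δ₀, G₀⟩ :=
    exists_good B hA (span0_eq B hA h0 hu₀ hne₀ hε₀) s1 hε₀
  have hn := scal_n (good_eqs B hA G₀)
  obtain ⟨u, hu, hne, hε, huu⟩ : ∃ u ∈ B.A₀, u ≠ 0 ∧ B.ε u = 0 ∧ u * u = u := by
    refine ⟨n⁻¹ • u₀, B.A₀.smul_mem _ hu₀, smul_ne_zero (inv_ne_zero hn) hne₀, by simp [hε₀], ?_⟩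
    simp [G₀.uu, smul_smul, hn]
  have s0 := span0_eq B hA h0 hu hne hε
  obtain ⟨n', a, b, q, α, β, γ, δ, G⟩ := exists_good B hA s0 s1 hε
  have hn' : n' = 1 := by
    obtain ⟨f, g, h, ad⟩ := exists_adapted B hA s0 s1
    have := congrArg g (G.uu.symm.trans huu)
    simpa [ad.gx] using this
  subst hn'
  have sol := scal_sol (good_eqs B hA G)
  have hy : y ∈ B.A₁ := by rw [s1]; exact Submodule.mem_span_singleton_self y
  have εy := B.ε_odd y hy
  obtain ⟨-, -, -, -, uy, yu, yy, Δu, Δy⟩ := G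
  have hx' : 1 - u ∈ B.A₀ := B.A₀.sub_mem B.one_mem hu
  have s0' := s0.trans (span_flip u)
  have huu' : (1 - u) * (1 - u) = 1 - u := by simp [sub_mul, mul_sub, huu]
  have εx' : B.ε (1 - u) = 1 := by simp [B.ε_one, hε]
  obtain ⟨rfl, sol⟩ := sol
  rcases sol with ⟨rfl, rfl, rfl, hq, rfl, rfl⟩ | ⟨rfl, rfl, rfl, hq, rfl, rfl⟩ |
    ⟨rfl, rfl, rfl, rfl, rfl⟩ | ⟨rfl, rfl, rfl, rfl, rfl⟩ | ⟨rfl, rfl, rfl, rfl, rfl, rfl⟩ |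
    ⟨rfl, rfl, rfl, rfl, rfl, rfl⟩ | ⟨rfl, rfl, rfl, rfl, rfl, rfl⟩ |
    ⟨rfl, rfl, rfl, rfl, rfl, rfl⟩ | ⟨rfl, rfl, rfl, rfl, rfl, rfl⟩
  · obtain ⟨t, ht⟩ := IsAlgClosed.exists_pow_nat_eq q⁻¹ (n := 2) (by norm_num)
    have ht0 : t ≠ 0 := by rintro rfl; simp at ht; exact hq ht.symm
    have htt : t * t * q = 1 := by rw [← pow_two, ht]; exact inv_mul_cancel₀ hq
    refine Or.inl ⟨u, t • y, hu, B.A₁.smul_mem _ hy, s0, s1.trans (span_scale y ht0), huu, ?_, ?_,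
      ?_, ?_, ?_, hε, by simp [εy]⟩
    · simp [yy, smul_smul, ← mul_assoc, htt]
    · simp [uy]
    · simp [yu]
    · rw [Δu]; module
    · simp only [map_smul, Δy, TensorProduct.tmul_smul, ← TensorProduct.smul_tmul']; module
  · obtain ⟨t, ht⟩ := IsAlgClosed.exists_pow_nat_eq q⁻¹ (n := 2) (by norm_num)
    have ht0 : t ≠ 0 := by rintro rfl; simp at ht; exact hq ht.symm
    have htt : t * t * q = 1 := by rw [← pow_two, ht]; exact inv_mul_cancel₀ hq
    refine Or.inr (Or.inl ⟨u, t • y, hu, B.A₁.smul_mem _ hy, s0, s1.trans (span_scale y ht0), huu,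
      ?_, ?_, ?_, ?_, ?_, hε, by simp [εy]⟩)
    · simp [yy, smul_smul, ← mul_assoc, htt]
    · simp [uy]
    · simp [yu]
    · rw [Δu]; module
    · simp only [map_smul, Δy, TensorProduct.tmul_smul, ← TensorProduct.smul_tmul']; module
  · by_cases hβ : β = 0
    · subst hβ
      refine Or.inr <| Or.inr <| Or.inl ⟨u, y, hu, hy, s0, s1, huu, by simp [yy], by simp [uy],
        by simp [yu], ?_, ?_, hε, εy⟩
      · rw [Δu]; module
      · rw [Δy]; module
    · obtain ⟨t, ht⟩ := IsAlgClosed.exists_pow_nat_eq β (n := 2) (by norm_num)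
      have ht0 : t ≠ 0 := by rintro rfl; simp at ht; exact hβ ht.symm
      refine Or.inr <| Or.inr <| Or.inr <| Or.inl ⟨u, t • y, hu, B.A₁.smul_mem _ hy, s0,
        s1.trans (span_scale y ht0), huu, by simp [yy], by simp [uy],
        by simp [yu], ?_, ?_, hε, by simp [εy]⟩
      · rw [Δu, ← ht]
        simp only [TensorProduct.tmul_smul, ← TensorProduct.smul_tmul']; module
      · simp only [map_smul, Δy, TensorProduct.tmul_smul, ← TensorProduct.smul_tmul']; module
  · by_cases hβ : β = 0
    · subst hβ
      refine Or.inr <| Or.inr <| Or.inr <| Or.inr <| Or.inl ⟨1 - u, y, hx', hy, s0', s1, huu',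
        by simp [yy], by simp [uy, sub_mul], by simp [yu, mul_sub], ?_, ?_, εx', εy⟩
      · simp only [map_sub, B.Δ_one, Δu, TensorProduct.tmul_sub, TensorProduct.sub_tmul]; module
      · simp only [Δy, TensorProduct.tmul_sub, TensorProduct.sub_tmul]; module
    · obtain ⟨t, ht⟩ := IsAlgClosed.exists_pow_nat_eq (-β) (n := 2) (by norm_num)
      have ht0 : t ≠ 0 := by rintro rfl; simp at ht; exact hβ ht
      have hb : β = -t ^ 2 := by rw [ht]; ring
      refine Or.inr <| Or.inr <| Or.inr <| Or.inr <| Or.inr <| Or.inl ⟨1 - u, t • y, hx',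
        B.A₁.smul_mem _ hy, s0', s1.trans (span_scale y ht0), huu',
        by simp [yy], by simp [uy, sub_mul], by simp [yu, mul_sub], ?_, ?_, εx', by simp [εy]⟩
      · simp only [map_sub, B.Δ_one, Δu, TensorProduct.tmul_sub, TensorProduct.sub_tmul,
          TensorProduct.tmul_smul, ← TensorProduct.smul_tmul', hb]; module
      · simp only [map_smul, Δy, TensorProduct.tmul_sub, TensorProduct.sub_tmul,
          TensorProduct.tmul_smul, ← TensorProduct.smul_tmul']; module
  · refine Or.inr <| Or.inr <| Or.inr <| Or.inr <| Or.inr <| Or.inr <| Or.inl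
      ⟨u, y, hu, hy, s0, s1, huu, by simp [yy], by simp [uy], by simp [yu], ?_, ?_, hε, εy⟩
    · rw [Δu]; module
    · rw [Δy]; module
  · refine Or.inr <| Or.inr <| Or.inr <| Or.inr <| Or.inr <| Or.inr <| Or.inr <| Or.inl
      ⟨u, y, hu, hy, s0, s1, huu, by simp [yy], by simp [uy], by simp [yu], ?_, ?_, hε, εy⟩
    · rw [Δu]; module
    · rw [Δy]; module
  · refine Or.inr <| Or.inr <| Or.inr <| Or.inr <| Or.inr <| Or.inr <| Or.inr <| Or.inr <| Or.inl
      ⟨u, y, hu, hy, s0, s1, huu, by simp [yy], by simp [uy], by simp [yu], ?_, ?_, hε, εy⟩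
    · rw [Δu]; module
    · rw [Δy]; module
  · refine Or.inr <| Or.inr <| Or.inr <| Or.inr <| Or.inr <| Or.inr <| Or.inr <| Or.inr <|
      Or.inr <| Or.inl
      ⟨u, y, hu, hy, s0, s1, huu, by simp [yy], by simp [uy], by simp [yu], ?_, ?_, hε, εy⟩
    · rw [Δu]; module
    · rw [Δy]; module
  · refine Or.inr <| Or.inr <| Or.inr <| Or.inr <| Or.inr <| Or.inr <| Or.inr <| Or.inr <|
      Or.inr <| Or.inr ⟨1 - u, y, hx', hy, s0', s1, huu',
        by simp [yy], by simp [uy, sub_mul], by simp [yu, mul_sub], ?_, ?_, εx', εy⟩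
    · simp only [map_sub, B.Δ_one, Δu, TensorProduct.tmul_sub, TensorProduct.sub_tmul]; module
    · simp only [Δy, TensorProduct.tmul_sub, TensorProduct.sub_tmul]; module

/-- A common normal form for the eleven families. -/
def NForm (B : SuperBialgebra K A) (e b c β g₂ d₂ : K) : Prop :=
  ∃ x y : A, B.A₀ = Submodule.span K {1, x} ∧ B.A₁ = Submodule.span K {y} ∧
    x * x = x ∧ y * y = c • x ∧ x * y = y ∧ y * x = b • y ∧
    (∃ p q r : K, B.Δ x = p • (1 ⊗ₜ[K] x) + q • (x ⊗ₜ[K] 1) + r • (x ⊗ₜ[K] x)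
      + β • (y ⊗ₜ[K] y)) ∧
    (∃ g₁ d₁ : K, B.Δ y = g₁ • (1 ⊗ₜ[K] y) + d₁ • (y ⊗ₜ[K] 1) + g₂ • (x ⊗ₜ[K] y)
      + d₂ • (y ⊗ₜ[K] x)) ∧
    B.ε x = e

lemma NForm.unique (B : SuperBialgebra K A) (hA : Module.finrank K A = 3)
    {e b c β g₂ d₂ e' b' c' β' g₂' d₂' : K} (F : NForm B e b c β g₂ d₂)
    (F' : NForm B e' b' c' β' g₂' d₂') :
    e = e' ∧ b = b' ∧ (c = 0 ↔ c' = 0) ∧ (β = 0 ↔ β' = 0) ∧ g₂ = g₂' ∧ d₂ = d₂' := by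
  obtain ⟨x, y, s0, s1, xx, yy, xy, yx, ⟨p, q, r, Δx⟩, ⟨g₁, d₁, Δy⟩, εx⟩ := F
  obtain ⟨x', y', s0', s1', xx', yy', xy', yx', ⟨p', q', r', Δx'⟩, ⟨g₁', d₁', Δy'⟩, εx'⟩ := F'
  obtain ⟨f, g, h, ad⟩ := exists_adapted B hA s0 s1
  obtain ⟨f', g', h', ad'⟩ := exists_adapted B hA s0' s1'
  obtain ⟨k, l, hx'⟩ := Submodule.mem_span_pair.1 (s0 ▸ ad'.hx)
  obtain ⟨t, hy'⟩ := Submodule.mem_span_singleton.1 (s1 ▸ ad'.hy)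
  have ht : t ≠ 0 := by
    rintro rfl
    have := ad'.hhy
    rw [← hy'] at this
    simp at this
  have hkl : k + l = 1 := by
    have := congrArg h xy'
    rw [← hx', ← hy'] at this
    simp [add_mul, xy, ad.hhy] at this
    apply mul_left_cancel₀ ht
    linear_combination this
  have hk : k * k = k := by
    have := congrArg f xx'
    rw [← hx'] at this
    simpa [add_mul, mul_add, xx, ad.f1, ad.fx, -mul_eq_left₀, -mul_eq_right₀] using this
  have hk0 : k = 0 := by
    by_contra hk0
    have hk1 : k = 1 := by simpa [hk0] using hk
    have hl : l = 0 := by linear_combination hkl - hk1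
    subst hk1 hl
    have := ad'.gx
    rw [← hx'] at this
    simp [ad'.g1] at this
  subst hk0
  have hl : l = 1 := by linear_combination hkl
  subst hl
  simp only [zero_smul, one_smul, zero_add] at hx'
  subst hx' hy'
  obtain ⟨hu, hy, -, -, f1, fx, fy, g1, gx, gy, h1, hhx, hhy⟩ := ad
  refine ⟨εx.symm.trans εx', ?_, ?_, ?_, ?_, ?_⟩
  · have := congrArg h yx'
    simp [yx, hhy] at this
    grind
  · have := congrArg g yy'
    simp [yy, gx] at this
    grind
  · have := congrArg (T2 h h) (Δx.symm.trans Δx')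
    simp [h1, hhx, hhy] at this
    grind
  · have := congrArg (T2 g h) Δy'
    simp [Δy, g1, gx, gy, h1, hhx, hhy] at this
    grind
  · have := congrArg (T2 h g) Δy'
    simp [Δy, g1, gx, gy, h1, hhx, hhy] at this
    grind

lemma nform_of (B : SuperBialgebra K A) (i : Fin 11)
    (hi : ![B21a B, B21b B, B22a B, B22b B, B22c B, B22d B,
        B23a B, B23b B, B23c B, B23d B, B23e B] i) :
    NForm B (![0, 0, 0, 0, 1, 1, 0, 0, 0, 0, 1] i) (![1, 1, 0, 0, 0, 0, 1, 1, 1, 1, 1] i)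
      (![1, 1, 0, 0, 0, 0, 0, 0, 0, 0, 0] i) (![0, 0, 0, 1, 0, 1, 0, 0, 0, 0, 0] i)
      (![0, -1, -1, -1, 1, 1, -1, -1, 0, 0, 1] i)
      (![-1, 0, -1, -1, 1, 1, -1, 0, -1, 0, 1] i) := by
  fin_cases i <;> obtain ⟨x, y, -, -, s0, s1, xx, yy, xy, yx, Δx, Δy, εx, -⟩ := hi
  pick_goal 5
  pick_goal 6
  pick_goal 11
  iterate 3
    refine ⟨x, y, s0, s1, xx, ?_, xy, ?_, ⟨0, 0, 1, ?_⟩, ⟨0, 0, ?_⟩, εx⟩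
    · rw [yy]; simp
    · rw [yx]; simp
    · rw [Δx]; simp
    · rw [Δy]; simp; abel
  all_goals
    refine ⟨x, y, s0, s1, xx, ?_, xy, ?_, ⟨1, 1, -1, ?_⟩, ⟨1, 1, ?_⟩, εx⟩
    · rw [yy]; simp
    · rw [yx]; simp
    · rw [Δx]; simp; try abel
    · rw [Δy]; simp; try abel

end Helpers2

/-- every 3-dimensional superbialgebra with `dim A₀ = 2` is isomorphic to
exactly one of the eleven pairwise non-isomorphic superbialgebras listed. -/
theorem three_dim_superbialgebra_classification
    {K A : Type*} [Field K] [IsAlgClosed K] [CharZero K] [Ring A] [Algebra K A]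
    (B : SuperBialgebra K A)
    (hA : Module.finrank K A = 3)
    (h0 : Module.finrank K B.A₀ = 2) :
    ∃! i : Fin 11,
      ![B21a B, B21b B, B22a B, B22b B, B22c B, B22d B,
        B23a B, B23b B, B23c B, B23d B, B23e B] i := by
  classical
  have huniq : ∀ i j : Fin 11,
      ![B21a B, B21b B, B22a B, B22b B, B22c B, B22d B,
        B23a B, B23b B, B23c B, B23d B, B23e B] i →
      ![B21a B, B21b B, B22a B, B22b B, B22c B, B22d B,
        B23a B, B23b B, B23c B, B23d B, B23e B] j → i = j := by
    intro i j hi hj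
    have key := NForm.unique B hA (nform_of B i hi) (nform_of B j hj)
    clear hi hj
    have h2 : (-1 : K) ≠ 1 := by norm_num
    have h3 : (1 : K) ≠ -1 := by norm_num
    fin_cases i <;> fin_cases j <;> first | rfl | (exfalso; simp [h2, h3] at key)
  have hex : ∃ i : Fin 11, ![B21a B, B21b B, B22a B, B22b B, B22c B, B22d B,
        B23a B, B23b B, B23c B, B23d B, B23e B] i := by
    rcases classify_exists B hA h0 with h | h | h | h | h | h | h | h | h | h | h
    · exact ⟨0, h⟩
    · exact ⟨1, h⟩
    · exact ⟨2, h⟩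
    · exact ⟨3, h⟩
    · exact ⟨4, h⟩
    · exact ⟨5, h⟩
    · exact ⟨6, h⟩
    · exact ⟨7, h⟩
    · exact ⟨8, h⟩
    · exact ⟨9, h⟩
    · exact ⟨10, h⟩
  obtain ⟨i, hi⟩ := hex
  exact ⟨i, hi, fun j hj => huniq j i hj hi⟩
end

section
/- There is no non-trivial 3-dimensional Hopf superalgebra over K: every 3-dimensional Hopf superalgebra A = A₀ ⊕ A₁ over K has trivial odd part, A₁ = {0}. -/
open TensorProduct

namespace SuperAlgebra
variable {K A : Type*} [Field K] [Ring A] [Algebra K A] (S : SuperAlgebra K A)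

lemma p0_even {a : A} (h : a ∈ S.A₀) : S.p₀ a = a := by
  have := Submodule.projectionOnto_apply_left S.compl ⟨a, h⟩
  exact congrArg Subtype.val this
lemma p0_odd {a : A} (h : a ∈ S.A₁) : S.p₀ a = 0 := by
  have := Submodule.projectionOnto_apply_right S.compl ⟨a, h⟩
  exact congrArg Subtype.val this
lemma p1_odd {a : A} (h : a ∈ S.A₁) : S.p₁ a = a := by
  have := Submodule.projectionOnto_apply_left S.compl.symm ⟨a, h⟩
  exact congrArg Subtype.val this
lemma p1_even {a : A} (h : a ∈ S.A₀) : S.p₁ a = 0 := by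
  have := Submodule.projectionOnto_apply_right S.compl.symm ⟨a, h⟩
  exact congrArg Subtype.val this

lemma bimul_tmul (a b c d : A) : S.superBimul ((a ⊗ₜ b) ⊗ₜ (c ⊗ₜ d)) =
    (a * S.p₀ c) ⊗ₜ[K] (S.p₀ b * d) + (a * S.p₁ c) ⊗ₜ[K] (S.p₀ b * d)
    + (a * S.p₀ c) ⊗ₜ[K] (S.p₁ b * d) - (a * S.p₁ c) ⊗ₜ[K] (S.p₁ b * d) := by
  simp [superBimul, rearr, τ, TensorProduct.tmul_add, TensorProduct.add_tmul,
    TensorProduct.tmul_sub, TensorProduct.sub_tmul]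
end SuperAlgebra

/-- The functional `f ⊗ g` on `A ⊗ A`. -/
noncomputable def tfun {K A : Type*} [Field K] [Ring A] [Algebra K A] (f g : A →ₗ[K] K) :
    A ⊗[K] A →ₗ[K] K := LinearMap.mul' K K ∘ₗ TensorProduct.map f g

/-- The functional `f ⊗ (g ⊗ h)` on `A ⊗ (A ⊗ A)`. -/
noncomputable def tfun3 {K A : Type*} [Field K] [Ring A] [Algebra K A] (f g h : A →ₗ[K] K) :
    A ⊗[K] (A ⊗[K] A) →ₗ[K] K := LinearMap.mul' K K ∘ₗ TensorProduct.map f (tfun g h)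

section
variable {K A : Type*} [Field K] [Ring A] [Algebra K A]
@[simp] lemma tfun_tmul (f g : A →ₗ[K] K) (a b : A) : tfun f g (a ⊗ₜ b) = f a * g b := by
  simp [tfun]
@[simp] lemma tfun3_tmul (f g h : A →ₗ[K] K) (a b c : A) :
    tfun3 f g h (a ⊗ₜ (b ⊗ₜ c)) = f a * (g b * h c) := by
  simp [tfun3]

lemma numeric [CharZero K] (l r σ μ c s α β κ η : K)
    (h1 : r * r = l * r) (h2 : α * c = α * α) (h2' : α * s = β * s)
    (h3 : μ * s = (α - β) * (σ - r))
    (h4 : 2 + 4 * c * l + c * c * l * l - s * s * μ * μ = l * c)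
    (h5 : κ + 1 + c * κ * l + s * η * μ = 0)
    (h6 : 1 + α * l + α * r + c * r + c * α * l * r - s * μ * (1 + β * σ) = r * α) : False := by
  have hm : s * μ = 0 := by
    by_cases hs : s = 0
    · simp [hs]
    · have : α = β := mul_right_cancel₀ hs h2'
      rw [this] at h3
      linear_combination h3
  have h4' : (c * l + 1) * (c * l + 2) = 0 := by linear_combination h4 + s * μ * hm
  have hk : κ * (1 + c * l) = -1 := by linear_combination h5 - η * hm
  have hcl : c * l = -2 := by
    rcases mul_eq_zero.1 h4' with h | h
    · rw [add_comm 1, h] at hk; simp at hk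
    · linear_combination h
  have h6' : (1 + α * l) * (1 + c * r) = 0 := by linear_combination h6 + (1 + β * σ) * hm
  rcases mul_eq_zero.1 h6' with h | h
  · have ha : α * (c - α) = 0 := by linear_combination h2
    rcases mul_eq_zero.1 ha with h' | h'
    · simp [h'] at h
    · have : (1 : K) = 0 := by linear_combination -h + hcl - l * h'
      simp at this
  · have ha : r * (r - l) = 0 := by linear_combination h1
    rcases mul_eq_zero.1 ha with h' | h'
    · simp [h'] at h
    · have : (1 : K) = 0 := by linear_combination -h + hcl + c * h'
      simp at this

lemma even_form (S : SuperAlgebra K A) (e x : A)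
    (h0 : ∀ a ∈ S.A₀, ∃ p q : K, a = p • 1 + q • e) (h1 : ∀ a ∈ S.A₁, ∃ q : K, a = q • x)
    (z : A ⊗[K] A) (hz : z ∈ S.evenTensor) : ∃ p q r t u : K,
    z = p • (1 ⊗ₜ 1) + q • (1 ⊗ₜ e) + r • (e ⊗ₜ 1) + t • (e ⊗ₜ e) + u • (x ⊗ₜ x) := by
  obtain ⟨_, ⟨y, rfl⟩, _, ⟨w, rfl⟩, rfl⟩ := Submodule.mem_sup.1 hz
  clear hz
  have hy : ∃ p q r t : K, TensorProduct.map S.A₀.subtype S.A₀.subtype y =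
      p • (1 ⊗ₜ 1) + q • (1 ⊗ₜ e) + r • (e ⊗ₜ 1) + t • (e ⊗ₜ e) := by
    induction y with
    | zero => exact ⟨0, 0, 0, 0, by simp⟩
    | tmul a b =>
      obtain ⟨p, q, h⟩ := h0 a a.2
      obtain ⟨p', q', h'⟩ := h0 b b.2
      refine ⟨p * p', p * q', q * p', q * q', ?_⟩
      simp only [TensorProduct.map_tmul, Submodule.subtype_apply]
      rw [h, h']
      simp only [TensorProduct.tmul_add, TensorProduct.add_tmul, TensorProduct.smul_tmul_smul]
      abel
    | add y w hy hw =>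
      obtain ⟨p, q, r, t, h⟩ := hy
      obtain ⟨p', q', r', t', h'⟩ := hw
      refine ⟨p + p', q + q', r + r', t + t', ?_⟩
      rw [map_add, h, h']
      module
  have hw : ∃ u : K, TensorProduct.map S.A₁.subtype S.A₁.subtype w = u • (x ⊗ₜ x) := by
    induction w with
    | zero => exact ⟨0, by simp⟩
    | tmul a b =>
      obtain ⟨p, h⟩ := h1 a a.2
      obtain ⟨p', h'⟩ := h1 b b.2
      refine ⟨p * p', ?_⟩
      simp only [TensorProduct.map_tmul, Submodule.subtype_apply]
      rw [h, h']
      simp only [TensorProduct.smul_tmul_smul]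
    | add y w hy hw =>
      obtain ⟨p, h⟩ := hy
      obtain ⟨p', h'⟩ := hw
      refine ⟨p + p', ?_⟩
      rw [map_add, h, h']
      module
  obtain ⟨p, q, r, t, h⟩ := hy
  obtain ⟨u, h'⟩ := hw
  exact ⟨p, q, r, t, u, by rw [h, h']⟩

lemma odd_form (S : SuperAlgebra K A) (e x : A)
    (h0 : ∀ a ∈ S.A₀, ∃ p q : K, a = p • 1 + q • e) (h1 : ∀ a ∈ S.A₁, ∃ q : K, a = q • x)
    (z : A ⊗[K] A) (hz : z ∈ S.oddTensor) : ∃ p q r t : K,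
    z = p • (1 ⊗ₜ x) + q • (e ⊗ₜ x) + r • (x ⊗ₜ 1) + t • (x ⊗ₜ e) := by
  obtain ⟨_, ⟨y, rfl⟩, _, ⟨w, rfl⟩, rfl⟩ := Submodule.mem_sup.1 hz
  clear hz
  have hy : ∃ p q : K, TensorProduct.map S.A₀.subtype S.A₁.subtype y =
      p • (1 ⊗ₜ x) + q • (e ⊗ₜ x) := by
    induction y with
    | zero => exact ⟨0, 0, by simp⟩
    | tmul a b =>
      obtain ⟨p, q, h⟩ := h0 a a.2
      obtain ⟨p', h'⟩ := h1 b b.2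
      refine ⟨p * p', q * p', ?_⟩
      simp only [TensorProduct.map_tmul, Submodule.subtype_apply]
      rw [h, h']
      simp only [TensorProduct.add_tmul, TensorProduct.smul_tmul_smul]
    | add y w hy hw =>
      obtain ⟨p, q, h⟩ := hy
      obtain ⟨p', q', h'⟩ := hw
      refine ⟨p + p', q + q', ?_⟩
      rw [map_add, h, h']
      module
  have hw : ∃ p q : K, TensorProduct.map S.A₁.subtype S.A₀.subtype w =
      p • (x ⊗ₜ 1) + q • (x ⊗ₜ e) := by
    induction w with
    | zero => exact ⟨0, 0, by simp⟩
    | tmul a b =>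
      obtain ⟨p, q, h⟩ := h0 b b.2
      obtain ⟨p', h'⟩ := h1 a a.2
      refine ⟨p' * p, p' * q, ?_⟩
      simp only [TensorProduct.map_tmul, Submodule.subtype_apply]
      rw [h, h']
      simp only [TensorProduct.tmul_add, TensorProduct.smul_tmul_smul]
    | add y w hy hw =>
      obtain ⟨p, q, h⟩ := hy
      obtain ⟨p', q', h'⟩ := hw
      refine ⟨p + p', q + q', ?_⟩
      rw [map_add, h, h']
      module
  obtain ⟨p, q, h⟩ := hy
  obtain ⟨r, t, h'⟩ := hw
  exact ⟨p, q, r, t, by rw [h, h']; abel⟩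

/-- The case of a one-dimensional odd part. -/
lemma case21 [CharZero K] (H : HopfSuperalgebra K A) (e x : A) (he : e ∈ H.A₀) (hx : x ∈ H.A₁)
    (hεe : H.ε e = 0)
    (h0 : ∀ a ∈ H.A₀, ∃ p q : K, a = p • 1 + q • e) (h1 : ∀ a ∈ H.A₁, ∃ q : K, a = q • x)
    (f g : A →ₗ[K] K) (f1 : f 1 = 0) (fe : f e = 1) (fx : f x = 0)
    (g1 : g 1 = 0) (ge : g e = 0) (gx : g x = 1) : False := by
  have hεx := H.ε_odd x hx
  have hε1 := H.ε_one
  have h0' : ∀ a ∈ H.A₀, H.ε a = 0 → ∃ q : K, a = q • e := by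
    intro a ha h
    obtain ⟨p, q, rfl⟩ := h0 a ha
    simp [hε1, hεe] at h
    exact ⟨q, by simp [h]⟩
  obtain ⟨l, hee⟩ := h0' (e * e) (H.mul_mem₀₀ _ he _ he) (by rw [H.ε_mul, hεe, zero_mul])
  obtain ⟨μ, hxx⟩ := h0' (x * x) (H.mul_mem₁₁ _ hx _ hx) (by rw [H.ε_mul, hεx, zero_mul])
  obtain ⟨r, hex⟩ := h1 (e * x) (H.mul_mem₀₁ _ he _ hx)
  obtain ⟨σ, hxe⟩ := h1 (x * e) (H.mul_mem₁₀ _ hx _ he)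
  obtain ⟨κ0, κ, hSe⟩ := h0 _ (H.antipode_even e he)
  obtain ⟨η, hSx⟩ := h1 _ (H.antipode_odd x hx)
  have hS1 : H.antipode 1 = 1 := by
    have := H.antipode_left 1
    simpa [H.Δ_one, hε1] using this
  have hΔe : ∃ c s : K, H.Δ e = 1 ⊗ₜ e + e ⊗ₜ 1 + c • (e ⊗ₜ e) + s • (x ⊗ₜ x) := by
    obtain ⟨p, q, r, t, u, h⟩ := even_form H.toSuperAlgebra e x h0 h1 _ (H.Δ_even e he)
    have hl := H.counit_left e
    have hr := H.counit_right e
    rw [h] at hl hr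
    simp [hε1, hεe, hεx] at hl hr
    have a1 := congrArg f hl
    have a2 := congrArg f hr
    have a3 := congrArg H.ε hl
    simp [f1, fe, hε1, hεe] at a1 a2 a3
    exact ⟨t, u, by rw [h, a1, a2, a3]; module⟩
  have hΔx : ∃ α β : K, H.Δ x = 1 ⊗ₜ x + x ⊗ₜ 1 + α • (e ⊗ₜ x) + β • (x ⊗ₜ e) := by
    obtain ⟨p, q, r, t, h⟩ := odd_form H.toSuperAlgebra e x h0 h1 _ (H.Δ_odd x hx)
    have hl := H.counit_left x
    have hr := H.counit_right x
    rw [h] at hl hr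
    simp [hε1, hεe, hεx] at hl hr
    have a1 := congrArg g hl
    have a2 := congrArg g hr
    simp [gx] at a1 a2
    exact ⟨q, t, by rw [h, a1, a2]; module⟩
  obtain ⟨c, s, hΔe⟩ := hΔe
  obtain ⟨α, β, hΔx⟩ := hΔx
  have q1 := congrArg g (mul_assoc e e x)
  simp [hee, hex, gx] at q1
  have q2 := congrArg (tfun3 f f g) (H.coassoc x)
  have q2' := congrArg (tfun3 g g g) (H.coassoc x)
  simp [hΔx, hΔe, H.Δ_one, TensorProduct.add_tmul, TensorProduct.tmul_add,
    TensorProduct.smul_tmul', f1, fe, fx, g1, ge, gx] at q2 q2'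
  have P0e := H.toSuperAlgebra.p0_even he
  have P1e := H.toSuperAlgebra.p1_even he
  have P0x := H.toSuperAlgebra.p0_odd hx
  have P1x := H.toSuperAlgebra.p1_odd hx
  have P01 := H.toSuperAlgebra.p0_even H.one_mem
  have P11 := H.toSuperAlgebra.p1_even H.one_mem
  have q3 := congrArg (tfun g g) (H.Δ_mul x x)
  have q4 := congrArg (tfun f f) (H.Δ_mul e e)
  have q6 := congrArg (tfun f g) (H.Δ_mul e x)
  simp [hΔx, hΔe, hxx, hee, hex, TensorProduct.add_tmul, TensorProduct.tmul_add, 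
    TensorProduct.smul_tmul', SuperAlgebra.bimul_tmul, P0e, P1e, P0x, P1x, P01, P11,
    hxe, f1, fe, fx, g1, ge, gx] at q3 q4 q6
  have q5 := H.antipode_left e
  simp [hΔe, hSe, hSx, hS1, hεe, hee, hxx, add_mul] at q5
  have q5f := congrArg f q5
  have q5e := congrArg H.ε q5
  simp [f1, fe, hε1, hεe] at q5f q5e
  refine numeric l r σ μ c s α β κ η ?_ ?_ ?_ ?_ ?_ ?_ ?_
  · rcases q1 with q | q <;> simp [q]
  · rcases q2 with q | q <;> simp [q]
  · rcases q2' with q | q <;> simp [q]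
  · linear_combination q3
  · linear_combination -q4
  · linear_combination q5f - c * q5e
  · linear_combination -q6

/-- The case of a one-dimensional even part. -/
lemma case12 (H : HopfSuperalgebra K A) (x y : A) (hx : x ∈ H.A₁) (hy : y ∈ H.A₁)
    (h0 : ∀ a ∈ H.A₀, ∃ p : K, a = p • 1)
    (f g : A →ₗ[K] K) (f1 : f 1 = 0) (fx : f x = 1) (fy : f y = 0)
    (g1 : g 1 = 0) (gx : g x = 0) (gy : g y = 1) : False := by
  have hε1 := H.ε_one
  have key : ∀ z ∈ H.A₁, H.Δ z = 1 ⊗ₜ z + z ⊗ₜ 1 := by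
    intro z hz
    obtain ⟨_, ⟨u, rfl⟩, _, ⟨v, rfl⟩, h⟩ := Submodule.mem_sup.1 (H.Δ_odd z hz)
    have hu : ∃ m ∈ H.A₁, TensorProduct.map H.A₀.subtype H.A₁.subtype u = 1 ⊗ₜ m := by
      clear h
      induction u with
      | zero => exact ⟨0, zero_mem _, by simp⟩
      | tmul a b =>
        obtain ⟨p, h⟩ := h0 a a.2
        refine ⟨p • b, Submodule.smul_mem _ _ b.2, ?_⟩
        simp only [TensorProduct.map_tmul, Submodule.subtype_apply]
        rw [h, TensorProduct.smul_tmul]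
      | add u w hu hw =>
        obtain ⟨m, hm, h⟩ := hu
        obtain ⟨n, hn, h'⟩ := hw
        exact ⟨m + n, add_mem hm hn, by rw [map_add, h, h', TensorProduct.tmul_add]⟩
    have hv : ∃ m ∈ H.A₁, TensorProduct.map H.A₁.subtype H.A₀.subtype v = m ⊗ₜ 1 := by
      clear h
      induction v with
      | zero => exact ⟨0, zero_mem _, by simp⟩
      | tmul a b =>
        obtain ⟨p, h⟩ := h0 b b.2
        refine ⟨p • a, Submodule.smul_mem _ _ a.2, ?_⟩
        simp only [TensorProduct.map_tmul, Submodule.subtype_apply]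
        rw [h, TensorProduct.smul_tmul]
      | add u w hu hw =>
        obtain ⟨m, hm, h⟩ := hu
        obtain ⟨n, hn, h'⟩ := hw
        exact ⟨m + n, add_mem hm hn, by rw [map_add, h, h', TensorProduct.add_tmul]⟩
    obtain ⟨m, hm, hu⟩ := hu
    obtain ⟨n, hn, hv⟩ := hv
    rw [hu, hv] at h
    have hl := H.counit_left z
    have hr := H.counit_right z
    rw [← h] at hl hr
    simp [hε1, H.ε_odd m hm, H.ε_odd n hn] at hl hr
    rw [← h, hl, hr]
  have hxy : x * y = 0 := by
    obtain ⟨p, h⟩ := h0 _ (H.mul_mem₁₁ _ hx _ hy)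
    have := congrArg H.ε h
    simp [H.ε_mul, H.ε_odd _ hx, hε1] at this
    rw [h, ← this, zero_smul]
  have P0x := H.toSuperAlgebra.p0_odd hx
  have P1x := H.toSuperAlgebra.p1_odd hx
  have P0y := H.toSuperAlgebra.p0_odd hy
  have P1y := H.toSuperAlgebra.p1_odd hy
  have P01 := H.toSuperAlgebra.p0_even H.one_mem
  have P11 := H.toSuperAlgebra.p1_even H.one_mem
  have q := congrArg (tfun f g) (H.Δ_mul x y)
  simp [key x hx, key y hy, hxy, TensorProduct.add_tmul, TensorProduct.tmul_add,
    SuperAlgebra.bimul_tmul, P0x, P1x, P0y, P1y, P01, P11, f1, fx, fy, g1, gx, gy] at q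

lemma two_dim {V : Type*} [AddCommGroup V] [Module K V] (h2 : Module.finrank K V = 2)
    (E : V →ₗ[K] K) (u : V) (hE1 : E u = 1) :
    ∃ (e : V) (f : V →ₗ[K] K), E e = 0 ∧ f u = 0 ∧ f e = 1 ∧ ∀ a, a = E a • u + f a • e := by
  have : FiniteDimensional K V := Module.finite_of_finrank_pos (by omega)
  have hker : Module.finrank K (LinearMap.ker E) = 1 := by
    have := LinearMap.finrank_range_add_finrank_ker E
    have hr : LinearMap.range E = ⊤ := by
      rw [LinearMap.range_eq_top]
      intro k
      exact ⟨k • u, by rw [map_smul, hE1]; simp⟩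
    rw [hr, h2] at this
    simp at this
    omega
  let b := Module.finBasisOfFinrankEq K _ hker
  obtain ⟨pk, hpk⟩ : ∃ pk : V →ₗ[K] LinearMap.ker E, ∀ a, (pk a : V) = a - E a • u :=
    ⟨LinearMap.codRestrict _ (LinearMap.id - E.smulRight u) (by
      intro a
      simp [LinearMap.mem_ker, hE1]), fun a => rfl⟩
  have pk1 : pk u = 0 := Subtype.ext (by rw [hpk, hE1]; simp)
  have pke : ∀ z : LinearMap.ker E, pk z = z := by
    intro z
    have := z.2
    rw [LinearMap.mem_ker] at this
    exact Subtype.ext (by rw [hpk, this]; simp)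
  refine ⟨(b 0).1, b.coord 0 ∘ₗ pk, (b 0).2, by simp [pk1], by simp [pke], ?_⟩
  intro a
  have := b.sum_repr (pk a)
  have := congrArg Subtype.val this
  rw [hpk] at this
  simp at this
  simp [this]

end

/-- there is no non-trivial 3-dimensional Hopf superalgebra: every
3-dimensional Hopf superalgebra has trivial odd part. -/
theorem no_nontrivial_three_dim_hopf_superalgebra
    {K A : Type*} [Field K] [IsAlgClosed K] [CharZero K] [Ring A] [Algebra K A]
    (H : HopfSuperalgebra K A)
    (hdim : Module.finrank K A = 3) :
    H.A₁ = ⊥ := by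
  have : FiniteDimensional K A := Module.finite_of_finrank_pos (by omega)
  have hsum := Submodule.finrank_add_eq_of_isCompl H.compl
  rw [hdim] at hsum
  have h1ne : (1 : A) ≠ 0 := by
    intro h
    have := H.ε_one
    simp [h] at this
  have h0pos : 0 < Module.finrank K H.A₀ := by
    rw [Module.finrank_pos_iff]
    exact ⟨⟨1, H.one_mem⟩, 0, fun h => h1ne (by simpa using congrArg Subtype.val h)⟩
  let pr : A →ₗ[K] H.A₁ := Submodule.projectionOnto H.A₁ H.A₀ H.compl.symm
  have pr1 : ∀ a ∈ H.A₀, pr a = 0 := fun a ha =>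
    Submodule.projectionOnto_apply_right H.compl.symm ⟨a, ha⟩
  have prx : ∀ x : H.A₁, pr x = x := fun x =>
    Submodule.projectionOnto_apply_left H.compl.symm x
  have hcases : Module.finrank K H.A₁ = 0 ∨ Module.finrank K H.A₁ = 1 ∨
    Module.finrank K H.A₁ = 2 := by omega
  rcases hcases with h | h | h
  · exact Submodule.finrank_eq_zero.1 h
  · exfalso
    have h2 : Module.finrank K H.A₀ = 2 := by omega
    obtain ⟨E, hE⟩ : ∃ E : H.A₀ →ₗ[K] K, ∀ a, E a = H.ε a :=
      ⟨H.ε ∘ₗ H.A₀.subtype, fun _ => rfl⟩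
    have hE1 : E ⟨1, H.one_mem⟩ = 1 := (hE _).trans H.ε_one
    obtain ⟨e, f, hEe, f1, fe, hf⟩ := two_dim h2 E _ hE1
    let b' := Module.finBasisOfFinrankEq K _ h
    let p0 : A →ₗ[K] H.A₀ := Submodule.projectionOnto H.A₀ H.A₁ H.compl
    have p0o : ∀ a ∈ H.A₁, p0 a = 0 := fun a ha =>
      Submodule.projectionOnto_apply_right H.compl ⟨a, ha⟩
    have p0e : ∀ x : H.A₀, p0 x = x := fun x =>
      Submodule.projectionOnto_apply_left H.compl x
    refine case21 H e.1 (b' 0).1 e.2 (b' 0).2 ((hE _).symm.trans hEe) ?_ ?_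
      (f ∘ₗ p0) (b'.coord 0 ∘ₗ pr) ?_ ?_ ?_ ?_ ?_ ?_
    · intro a ha
      exact ⟨E ⟨a, ha⟩, f ⟨a, ha⟩, by simpa using congrArg Subtype.val (hf ⟨a, ha⟩)⟩
    · intro a ha
      refine ⟨b'.coord 0 ⟨a, ha⟩, ?_⟩
      have := b'.sum_repr ⟨a, ha⟩
      have := congrArg (fun z => z.1) this
      simp at this
      simp [this]
    · have := p0e ⟨1, H.one_mem⟩
      simp only at this
      simp [this, f1]
    · simp [p0e, fe]
    · simp [p0o]
    · simp [pr1 _ H.one_mem]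
    · simp [pr1]
    · simp [prx]
  · exfalso
    have h1 : Module.finrank K H.A₀ = 1 := by omega
    let b := Module.finBasisOfFinrankEq K _ h
    refine case12 H (b 0).1 (b 1).1 (b 0).2 (b 1).2 ?_ (b.coord 0 ∘ₗ pr) (b.coord 1 ∘ₗ pr)
      ?_ ?_ ?_ ?_ ?_ ?_
    · intro a ha
      have := (finrank_eq_one_iff_of_nonzero' (⟨1, H.one_mem⟩ : H.A₀)
        (fun h => h1ne (by simpa using congrArg Subtype.val h))).1 h1 ⟨a, ha⟩
      obtain ⟨p, hp⟩ := this
      exact ⟨p, by simpa using (congrArg Subtype.val hp).symm⟩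
    · simp [pr1 _ H.one_mem]
    · simp [prx]
    · simp [prx]
    · simp [pr1 _ H.one_mem]
    · simp [prx]
    · simp [prx]
end
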